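/- Let U, E ∈ C₆ be unitary elements. Then there exists a Jordan *-automorphism T of C₆ such that: (i) T(E) is a diagonal matrix; and (ii) every entry of T(U) lies in ℍ_ℂ × {0} ⊆ 𝕆 (i.e. the entries of T(U) are biquaternions). -/

import Mathlib

/-!
Write an element of `C₆` as a pair of a Hermitian biquaternionic matrix `M` and a vector `a` of
biquaternions, the latter encoding the skew-symmetric matrix of second Cayley–Dickson components. In
this model `V` in `Sp(3)` acts by `(M, a) ↦ (V M Vᴴ, V a)`. The other source of Jordan
`*`-automorphisms is the automorphism group of the real octonions, which acts entrywise and carries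
any given real octonion into `ℝ + ℝ i`.

Spectral theorem: every unitary, indeed every element `A + i B` with `A`, `B` self-adjoint and
operator commuting, becomes diagonal under some automorphism. Diagonal elements of `Sp(3)` and
octonion automorphisms make a self-adjoint element complex Hermitian without touching diagonal
matrices. So `A` can be made complex and then diagonal, after which `B` can be made complex;
operator commutativity now forces the two complex matrices to commute, and a complex unitary matrix
diagonalises both.

Hence `E` may be assumed diagonal, and only automorphisms fixing all diagonal matrices may be
applied to `U = α 𝟏 + β P + γ Q`, where `P` and `Q` are orthogonal minimal projections. One of them
turns `P` into a real matrix `w wᵀ`, which is not affected by octonion automorphisms any more.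
Orthogonality says that the vector `a` of second components of `Q` satisfies `w wᵀ a = a`, so `a` is
proportional to `w`, and an octonion automorphism annihilating a coordinate `a k` with `w k ≠ 0`
annihilates `a`.
-/

noncomputable section

open Matrix

/-- The biquaternions `ℍ_ℂ`. -/
abbrev HC : Type := Quaternion ℂ

/-- The `ℂ`-linear quaternion conjugation `x ↦ x⋄` on `ℍ_ℂ`. -/
def qdia (x : HC) : HC := ⟨x.re, -x.imI, -x.imJ, -x.imK⟩

/-- Coefficientwise complex conjugation `x ↦ x̄` on `ℍ_ℂ`. -/
def qbar (x : HC) : HC :=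
  ⟨starRingEnd ℂ x.re, starRingEnd ℂ x.imI, starRingEnd ℂ x.imJ, starRingEnd ℂ x.imK⟩

/-- The complex octonions `𝕆`, modelled as pairs of biquaternions. -/
abbrev Oct : Type := HC × HC

/-- Cayley–Dickson multiplication on `𝕆`. -/
def omul (x y : Oct) : Oct :=
  (x.1 * y.1 - y.2 * qdia x.2, qdia x.1 * y.2 + y.1 * x.2)

/-- The octonion unit `1 = (1, 0)`. -/
def oone : Oct := (1, 0)

/-- The linear involution `x ↦ x⋄` on `𝕆`. -/
def odia (x : Oct) : Oct := (qdia x.1, -x.2)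

/-- The conjugation `x ↦ x̄` on `𝕆`. -/
def obar (x : Oct) : Oct := (qbar x.1, qbar x.2)

/-- The conjugate-linear involution `x* = (x⋄)‾` on `𝕆`. -/
def ostar (x : Oct) : Oct := obar (odia x)

/-- `3×3` matrices of complex octonions. -/
abbrev M3O : Type := Matrix (Fin 3) (Fin 3) Oct

/-- Matrix product formed using the octonion multiplication `⬝` on entries. -/
def mmulO (X Y : M3O) : M3O := Matrix.of fun i j => ∑ k : Fin 3, omul (X i k) (Y k j)

/-- The Jordan product `X∘Y = ½(X⬝Y + Y⬝X)` on `M₃(𝕆)`. -/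
def jord (X Y : M3O) : M3O := (2⁻¹ : ℂ) • (mmulO X Y + mmulO Y X)

/-- The transpose with `⋄` applied entrywise, `Xᵈ`. -/
def mdia (X : M3O) : M3O := Matrix.of fun i j => odia (X j i)

/-- The involution `X*`: the conjugation `x ↦ x̄` applied entrywise. -/
def mstar (X : M3O) : M3O := Matrix.of fun i j => obar (X i j)

/-- The Cartan factor of type 6: `C₆ = H₃(𝕆) = {X ∈ M₃(𝕆) : Xᵈ = X}`. -/
def H3O : Set M3O := {X | mdia X = X}

/-- The triple product `{X,Y,Z} = (X∘Y*)∘Z + (Z∘Y*)∘X − (X∘Z)∘Y*` on `C₆`. -/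
def trip (X Y Z : M3O) : M3O :=
  jord (jord X (mstar Y)) Z + jord (jord Z (mstar Y)) X - jord (jord X Z) (mstar Y)

/-- The identity matrix `𝟏` of `M₃(𝕆)`. -/
def oneM : M3O := Matrix.of fun i j => if i = j then oone else 0

/-- A Jordan `*`-automorphism of `C₆`: a (ℂ-)linear bijection of `C₆ = H₃(𝕆)` onto itself
preserving the Jordan product `∘` and the involution `*`. -/
def IsJordanStarAut (T : M3O → M3O) : Prop :=
  Set.BijOn T H3O H3O ∧
  (∀ X ∈ H3O, ∀ Y ∈ H3O, T (X + Y) = T X + T Y) ∧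
  (∀ (c : ℂ), ∀ X ∈ H3O, T (c • X) = c • T X) ∧
  (∀ X ∈ H3O, ∀ Y ∈ H3O, T (jord X Y) = jord (T X) (T Y)) ∧
  (∀ X ∈ H3O, T (mstar X) = mstar (T X))

/-- A projection in `C₆`: `P ∈ H₃(𝕆)` with `P* = P` and `P∘P = P`. -/
def IsProjO (P : M3O) : Prop := P ∈ H3O ∧ mstar P = P ∧ jord P P = P

/-- A minimal projection in `C₆`: a nonzero projection `P` with `{P,X,P} ∈ ℂ·P`
for every `X ∈ C₆`. -/
def IsMinProjO (P : M3O) : Prop :=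
  IsProjO P ∧ P ≠ 0 ∧ ∀ X ∈ H3O, ∃ c : ℂ, trip P X P = c • P

/-- A unitary element of `C₆`: `U ∈ C₆` with `{U,U,X} = X` for every `X ∈ C₆`. -/
def IsUnitaryO (U : M3O) : Prop := U ∈ H3O ∧ ∀ X ∈ H3O, trip U U X = X

section

open Quaternion ComplexConjugate

/-! ### Biquaternions -/

-- Mathlib's instances on `Quaternion ℂ` take the ring structure of `ℂ` apart differently from the
-- type `HC`; restating them for `HC` makes the general lemmas available to `rw` and `simp`.
local instance : Ring HC := Quaternion.instRing

local instance : StarRing HC := Quaternion.instStarRing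

local instance : Module ℂ HC := Quaternion.instModule

local instance : Algebra ℂ HC := Quaternion.algebra

theorem qdia_eq_star (x : HC) : qdia x = star x := by
  ext <;> simp [qdia]

@[simp] theorem re_qbar (x : HC) : (qbar x).re = conj x.re := rfl

@[simp] theorem imI_qbar (x : HC) : (qbar x).imI = conj x.imI := rfl

@[simp] theorem imJ_qbar (x : HC) : (qbar x).imJ = conj x.imJ := rfl

@[simp] theorem imK_qbar (x : HC) : (qbar x).imK = conj x.imK := rfl

/-- Coefficientwise complex conjugation as a ring homomorphism. -/
def qbarHom : HC →+* HC where
  toFun := qbar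
  map_zero' := by ext <;> simp
  map_one' := by ext <;> simp
  map_add' x y := by ext <;> simp
  map_mul' x y := by ext <;> simp

theorem qbarHom_apply (x : HC) : qbarHom x = qbar x := rfl

theorem qbarHom_star (x : HC) : qbarHom (star x) = star (qbarHom x) := by
  ext <;> simp [qbarHom_apply]

theorem qbar_smul (c : ℂ) (x : HC) : qbar (c • x) = conj c • qbar x := by
  ext <;> simp

theorem qbar_qbar (x : HC) : qbar (qbar x) = x := by
  ext <;> simp

/-- The inclusion of the real quaternions into the biquaternions, as a plain function. -/
def quatToHCFun (x : ℍ[ℝ]) : HC := ⟨x.re, x.imI, x.imJ, x.imK⟩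

@[simp] theorem re_quatToHCFun (x : ℍ[ℝ]) : (quatToHCFun x).re = x.re := rfl

@[simp] theorem imI_quatToHCFun (x : ℍ[ℝ]) : (quatToHCFun x).imI = x.imI := rfl

@[simp] theorem imJ_quatToHCFun (x : ℍ[ℝ]) : (quatToHCFun x).imJ = x.imJ := rfl

@[simp] theorem imK_quatToHCFun (x : ℍ[ℝ]) : (quatToHCFun x).imK = x.imK := rfl

/-- The inclusion of the real quaternions into the biquaternions; its range is the set of fixed
points of `qbar`. -/
def quatToHC : ℍ[ℝ] →+* HC where
  toFun := quatToHCFun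
  map_zero' := by ext <;> simp
  map_one' := by ext <;> simp
  map_add' x y := by ext <;> simp
  map_mul' x y := by ext <;> simp

theorem quatToHC_apply (x : ℍ[ℝ]) : quatToHC x = quatToHCFun x := rfl

theorem quatToHC_star (x : ℍ[ℝ]) : quatToHC (star x) = star (quatToHC x) := by
  ext <;> simp [quatToHC_apply]

theorem qbar_quatToHC (x : ℍ[ℝ]) : qbar (quatToHC x) = quatToHC x := by
  ext <;> simp [quatToHC_apply]

theorem exists_quatToHC_of_qbar {x : HC} (hx : qbar x = x) : ∃ q, quatToHC q = x := by
  refine ⟨⟨x.re.re, x.imI.re, x.imJ.re, x.imK.re⟩, ?_⟩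
  have real {z : ℂ} (hz : conj z = z) : (z.re : ℂ) = z := Complex.conj_eq_iff_re.1 hz
  ext1
  exacts [real congr(($hx).re), real congr(($hx).imI), real congr(($hx).imJ),
    real congr(($hx).imK)]

/-- The inclusion of the complex numbers into the biquaternions as `ℝ + ℝ i`. This is not the
scalar embedding: the imaginary unit goes to the quaternion `i`. -/
def complexToHC : ℂ →+* HC := quatToHC.comp Quaternion.ofComplex

theorem complexToHC_conj (z : ℂ) : complexToHC (conj z) = star (complexToHC z) := by
  ext <;> simp [complexToHC, quatToHC_apply]

theorem complexToHC_ofReal (r : ℝ) : complexToHC r = (r : ℂ) • (1 : HC) := by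
  ext <;> simp [complexToHC, quatToHC_apply, -Complex.coe_smul]

theorem qbar_complexToHC (z : ℂ) : qbar (complexToHC z) = complexToHC z :=
  qbar_quatToHC _

theorem complexToHC_injective : Function.Injective complexToHC := complexToHC.injective

theorem re_mul_comm (x y : HC) : (x * y).re = (y * x).re := by
  simp; ring

theorem eq_smul_one_of_star_eq {x : HC} (hx : star x = x) : x = x.re • (1 : HC) := by
  have zero {z : ℂ} (hz : -z = z) : z = 0 := by linear_combination (-1 / 2 : ℂ) * hz
  ext1
  · simp
  exacts [by simpa using zero congr(($hx).imI), by simpa using zero congr(($hx).imJ),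
    by simpa using zero congr(($hx).imK)]

/-! ### Complex octonions -/

theorem omul_apply (x y : Oct) :
    omul x y = (x.1 * y.1 - y.2 * star x.2, star x.1 * y.2 + y.1 * x.2) := by
  rw [omul, qdia_eq_star, qdia_eq_star]

theorem odia_apply (x : Oct) : odia x = (star x.1, -x.2) := by
  rw [odia, qdia_eq_star]

/-- The Cayley–Dickson multiplication as a bilinear map. -/
def omulBilin : Oct →ₗ[ℂ] Oct →ₗ[ℂ] Oct :=
  LinearMap.mk₂ ℂ omul
    (fun x y z => by
      simp only [omul_apply, Prod.fst_add, Prod.snd_add, star_add, add_mul, mul_add,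
        Prod.mk_add_mk, Prod.mk.injEq]
      constructor <;> abel)
    (fun c x y => by
      simp only [omul_apply, Prod.smul_fst, Prod.smul_snd, Quaternion.star_smul, smul_mul_assoc,
        mul_smul_comm, ← smul_sub, ← smul_add, Prod.smul_mk])
    (fun x y z => by
      simp only [omul_apply, Prod.fst_add, Prod.snd_add, add_mul, mul_add, Prod.mk_add_mk,
        Prod.mk.injEq]
      constructor <;> abel)
    (fun c x y => by
      simp only [omul_apply, Prod.smul_fst, Prod.smul_snd, smul_mul_assoc, mul_smul_comm,
        ← smul_sub, ← smul_add, Prod.smul_mk])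

theorem omulBilin_apply (x y : Oct) : omulBilin x y = omul x y := rfl

/-- The involution `x ↦ x⋄` of the octonions as a linear map. -/
def odiaLinear : Oct →ₗ[ℂ] Oct where
  toFun := odia
  map_add' x y := by simp [odia_apply, add_comm]
  map_smul' c x := by simp [odia_apply]

theorem odiaLinear_apply (x : Oct) : odiaLinear x = odia x := rfl

/-- The conjugation `x ↦ x̄` of the octonions as a conjugate-linear map. -/
def obarLinear : Oct →ₗ⋆[ℂ] Oct where
  toFun := obar
  map_add' x y := by simp [obar, ← qbarHom_apply]
  map_smul' c x := by simp [obar, qbar_smul]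

theorem obarLinear_apply (x : Oct) : obarLinear x = obar x := rfl

theorem odia_omul (x y : Oct) : odia (omul x y) = omul (odia y) (odia x) := by
  simp [odia_apply, omul_apply, add_comm]

theorem obar_odia (x : Oct) : obar (odia x) = odia (obar x) := by
  simp [obar, odia_apply, ← qbarHom_apply, qbarHom_star]

theorem obar_obar (x : Oct) : obar (obar x) = x := by
  simp [obar, qbar_qbar]

theorem oone_omul (x : Oct) : omul oone x = x := by
  simp [omul_apply, oone]

theorem omul_oone (x : Oct) : omul x oone = x := by
  simp [omul_apply, oone]

theorem odia_oone : odia oone = oone := by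
  simp [odia_apply, oone]

theorem obar_oone : obar oone = oone := by
  simp [obar, oone, ← qbarHom_apply]

/-! ### The Jordan algebra -/

theorem jord_apply (X Y : M3O) (i j : Fin 3) : jord X Y i j =
    (2⁻¹ : ℂ) • (∑ k, omulBilin (X i k) (Y k j) + ∑ k, omulBilin (Y i k) (X k j)) := rfl

theorem jord_comm (X Y : M3O) : jord X Y = jord Y X := by
  rw [jord, jord, add_comm]

/-- The Jordan product as a bilinear map. -/
def jordBilin : M3O →ₗ[ℂ] M3O →ₗ[ℂ] M3O :=
  have add_right (X Y Z : M3O) : jord X (Y + Z) = jord X Y + jord X Z := by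
    ext1 i j
    simp only [jord_apply, Matrix.add_apply, map_add, LinearMap.add_apply,
      Finset.sum_add_distrib, ← smul_add]
    congr 1
    abel
  have smul_right (c : ℂ) (X Y : M3O) : jord X (c • Y) = c • jord X Y := by
    ext1 i j
    simp only [jord_apply, Matrix.smul_apply, map_smul, LinearMap.smul_apply, ← Finset.smul_sum,
      ← smul_add, smul_comm c]
  LinearMap.mk₂ ℂ jord
    (fun X Y Z => by rw [jord_comm, add_right, jord_comm Z, jord_comm Z])
    (fun c X Y => by rw [jord_comm, smul_right, jord_comm Y]) add_right smul_right

theorem jordBilin_apply (X Y : M3O) : jordBilin X Y = jord X Y := rfl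

theorem mem_H3O {X : M3O} : X ∈ H3O ↔ ∀ i j, odia (X j i) = X i j :=
  ⟨fun h i j => congrFun (congrFun h i) j, fun h => Matrix.ext h⟩

/-- `H₃(𝕆)` as a complex subspace of `M₃(𝕆)`. -/
def H3OSubmodule : Submodule ℂ M3O where
  carrier := H3O
  zero_mem' := mem_H3O.2 fun _ _ => map_zero odiaLinear
  add_mem' hX hY := mem_H3O.2 fun i j =>
    (map_add odiaLinear _ _).trans (congrArg₂ _ (mem_H3O.1 hX i j) (mem_H3O.1 hY i j))
  smul_mem' c _ hX := mem_H3O.2 fun i j =>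
    (map_smul odiaLinear c _).trans (congrArg _ (mem_H3O.1 hX i j))

theorem jord_mem_H3O {X Y : M3O} (hX : X ∈ H3O) (hY : Y ∈ H3O) : jord X Y ∈ H3O := by
  have odia_sum {Z W : M3O} (hZ : Z ∈ H3O) (hW : W ∈ H3O) (i j : Fin 3) :
      odiaLinear (∑ k, omulBilin (Z j k) (W k i)) = ∑ k, omulBilin (W i k) (Z k j) := by
    simp only [map_sum, odiaLinear_apply, omulBilin_apply, odia_omul, mem_H3O.1 hZ, mem_H3O.1 hW]
  refine mem_H3O.2 fun i j => ?_
  rw [jord_apply, jord_apply, ← odiaLinear_apply, map_smul, map_add, odia_sum hX hY,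
    odia_sum hY hX, add_comm]

/-- The involution of `C₆` as a conjugate-linear map. -/
def mstarLinear : M3O →ₗ⋆[ℂ] M3O where
  toFun := mstar
  map_add' X Y := Matrix.ext fun i j => map_add obarLinear (X i j) (Y i j)
  map_smul' c X := Matrix.ext fun i j => map_smulₛₗ obarLinear c (X i j)

theorem mstarLinear_apply (X : M3O) : mstarLinear X = mstar X := rfl

theorem mstar_mstar (X : M3O) : mstar (mstar X) = X :=
  Matrix.ext fun _ _ => obar_obar _

theorem mstar_mem_H3O {X : M3O} (hX : X ∈ H3O) : mstar X ∈ H3O :=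
  mem_H3O.2 fun i j => (obar_odia _).symm.trans (congrArg obar (mem_H3O.1 hX i j))

/-! ### Diagonal matrices -/

/-- The diagonal matrix with complex scalars on the diagonal; these are the diagonal elements of
`C₆`. -/
def scalarDiag : (Fin 3 → ℂ) →ₗ[ℂ] M3O where
  toFun d := diagonal fun i => d i • oone
  map_add' d e := by simp only [Pi.add_apply, add_smul, diagonal_add]
  map_smul' c d := by
    ext1 i j
    obtain rfl | hij := eq_or_ne i j
    · simp [mul_smul]
    · simp [hij]

theorem scalarDiag_apply (d : Fin 3 → ℂ) : scalarDiag d = diagonal fun i => d i • oone := rfl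

theorem scalarDiag_one : scalarDiag 1 = oneM := by
  ext1 i j
  simp [scalarDiag_apply, diagonal_apply, oneM]

theorem scalarDiag_mem_H3O (d : Fin 3 → ℂ) : scalarDiag d ∈ H3O := by
  refine mem_H3O.2 fun i j => ?_
  obtain rfl | hij := eq_or_ne i j
  · simp only [scalarDiag_apply, diagonal_apply_eq, ← odiaLinear_apply, map_smul]
    rw [odiaLinear_apply, odia_oone]
  · simp only [scalarDiag_apply, diagonal_apply_ne _ hij, diagonal_apply_ne _ hij.symm,
      ← odiaLinear_apply, map_zero]

theorem apply_self_eq_re_smul_oone {X : M3O} (hX : X ∈ H3O) (i : Fin 3) :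
    X i i = (X i i).1.re • oone := by
  have hii : (star (X i i).1, -(X i i).2) = X i i := odia_apply _ ▸ mem_H3O.1 hX i i
  have : IsAddTorsionFree HC := .of_module_rat _
  have hsnd : (X i i).2 = 0 := self_eq_neg.1 congr(($hii).2).symm
  exact Prod.ext (eq_smul_one_of_star_eq congr(($hii).1)) (by simpa [oone] using hsnd)

theorem jord_scalarDiag_apply (d : Fin 3 → ℂ) (Y : M3O) (i j : Fin 3) :
    jord (scalarDiag d) Y i j = ((d i + d j) / 2) • Y i j := by
  have left : ∑ k, omulBilin (scalarDiag d i k) (Y k j) = d i • Y i j := by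
    rw [Finset.sum_eq_single_of_mem i (Finset.mem_univ i) fun k _ hk => by
      rw [scalarDiag_apply, diagonal_apply_ne _ hk.symm, map_zero, LinearMap.zero_apply]]
    rw [scalarDiag_apply, diagonal_apply_eq, map_smul, LinearMap.smul_apply, omulBilin_apply,
      oone_omul]
  have right : ∑ k, omulBilin (Y i k) (scalarDiag d k j) = d j • Y i j := by
    rw [Finset.sum_eq_single_of_mem j (Finset.mem_univ j) fun k _ hk => by
      rw [scalarDiag_apply, diagonal_apply_ne _ hk, map_zero]]
    rw [scalarDiag_apply, diagonal_apply_eq, map_smul, omulBilin_apply, omul_oone]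
  rw [jord_apply, left, right, ← add_smul, smul_smul, div_eq_inv_mul]

theorem oneM_mem_H3O : oneM ∈ H3O :=
  scalarDiag_one ▸ scalarDiag_mem_H3O 1

theorem oneM_jord (X : M3O) : jord oneM X = X := by
  ext1 i j
  rw [← scalarDiag_one, jord_scalarDiag_apply]
  simp

theorem jord_scalarDiag_scalarDiag (d e : Fin 3 → ℂ) :
    jord (scalarDiag d) (scalarDiag e) = scalarDiag (d * e) := by
  ext1 i j
  rw [jord_scalarDiag_apply]
  obtain rfl | hij := eq_or_ne i j
  · simp [scalarDiag_apply, smul_smul]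
  · simp [scalarDiag_apply, hij]

theorem mstar_scalarDiag (d : Fin 3 → ℂ) : mstar (scalarDiag d) = scalarDiag (star d) := by
  refine Matrix.ext fun i j => ?_
  rw [mstar, of_apply]
  obtain rfl | hij := eq_or_ne i j
  · rw [scalarDiag_apply, scalarDiag_apply, diagonal_apply_eq, diagonal_apply_eq,
      ← obarLinear_apply, map_smulₛₗ, obarLinear_apply, obar_oone]
    rfl
  · rw [scalarDiag_apply, scalarDiag_apply, diagonal_apply_ne _ hij, diagonal_apply_ne _ hij,
      ← obarLinear_apply, map_zero]

/-! ### Automorphisms -/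

namespace IsJordanStarAut

variable {S T : M3O → M3O} {X Y Z : M3O}

theorem of_invOn {T : M3O →ₗ[ℂ] M3O} (hinv : Set.InvOn S T H3O H3O)
    (hT : Set.MapsTo T H3O H3O) (hS : Set.MapsTo S H3O H3O)
    (hjord : ∀ X ∈ H3O, ∀ Y ∈ H3O, T (jord X Y) = jord (T X) (T Y))
    (hstar : ∀ X ∈ H3O, T (mstar X) = mstar (T X)) : IsJordanStarAut T :=
  ⟨hinv.bijOn hT hS, fun X _ Y _ => map_add T X Y, fun c X _ => map_smul T c X, hjord, hstar⟩

theorem mem (hT : IsJordanStarAut T) (hX : X ∈ H3O) : T X ∈ H3O :=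
  hT.1.mapsTo hX

theorem map_smul (hT : IsJordanStarAut T) (c : ℂ) (hX : X ∈ H3O) : T (c • X) = c • T X :=
  hT.2.2.1 c X hX

theorem map_add (hT : IsJordanStarAut T) (hX : X ∈ H3O) (hY : Y ∈ H3O) :
    T (X + Y) = T X + T Y :=
  hT.2.1 X hX Y hY

theorem map_jord (hT : IsJordanStarAut T) (hX : X ∈ H3O) (hY : Y ∈ H3O) :
    T (jord X Y) = jord (T X) (T Y) :=
  hT.2.2.2.1 X hX Y hY

theorem map_mstar (hT : IsJordanStarAut T) (hX : X ∈ H3O) : T (mstar X) = mstar (T X) :=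
  hT.2.2.2.2 X hX

/-- The linear map on `C₆` underlying a Jordan `*`-automorphism. -/
def toLinearMap (hT : IsJordanStarAut T) : H3OSubmodule →ₗ[ℂ] M3O where
  toFun X := T X
  map_add' X Y := hT.map_add X.2 Y.2
  map_smul' c X := hT.map_smul c X.2

theorem map_sub (hT : IsJordanStarAut T) (hX : X ∈ H3O) (hY : Y ∈ H3O) :
    T (X - Y) = T X - T Y :=
  _root_.map_sub hT.toLinearMap ⟨X, hX⟩ ⟨Y, hY⟩

theorem map_zero (hT : IsJordanStarAut T) : T 0 = 0 :=
  _root_.map_zero hT.toLinearMap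

theorem map_trip (hT : IsJordanStarAut T) (hX : X ∈ H3O) (hY : Y ∈ H3O) (hZ : Z ∈ H3O) :
    T (trip X Y Z) = trip (T X) (T Y) (T Z) := by
  have hY' := mstar_mem_H3O hY
  have hXY := jord_mem_H3O hX hY'
  have hZY := jord_mem_H3O hZ hY'
  have hXZ := jord_mem_H3O hX hZ
  rw [trip, hT.map_sub (H3OSubmodule.add_mem (jord_mem_H3O hXY hZ) (jord_mem_H3O hZY hX))
    (jord_mem_H3O hXZ hY'), hT.map_add (jord_mem_H3O hXY hZ) (jord_mem_H3O hZY hX),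
    hT.map_jord hXY hZ, hT.map_jord hZY hX, hT.map_jord hXZ hY', hT.map_jord hX hY',
    hT.map_jord hZ hY', hT.map_jord hX hZ, hT.map_mstar hY, trip]

theorem map_oneM (hT : IsJordanStarAut T) : T oneM = oneM := by
  obtain ⟨Y, hY, hTY⟩ := hT.1.surjOn oneM_mem_H3O
  calc T oneM = jord (T oneM) (T Y) := by rw [hTY, jord_comm, oneM_jord]
    _ = oneM := by rw [← hT.map_jord oneM_mem_H3O hY, oneM_jord, hTY]

theorem comp (hS : IsJordanStarAut S) (hT : IsJordanStarAut T) : IsJordanStarAut (S ∘ T) :=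
  ⟨hS.1.comp hT.1,
    fun X hX Y hY => by
      simp only [Function.comp_apply, hT.map_add hX hY, hS.map_add (hT.mem hX) (hT.mem hY)],
    fun c X hX => by
      simp only [Function.comp_apply, hT.map_smul c hX, hS.map_smul c (hT.mem hX)],
    fun X hX Y hY => by
      simp only [Function.comp_apply, hT.map_jord hX hY, hS.map_jord (hT.mem hX) (hT.mem hY)],
    fun X hX => by
      simp only [Function.comp_apply, hT.map_mstar hX, hS.map_mstar (hT.mem hX)]⟩

theorem exists_inverse (hT : IsJordanStarAut T) :
    ∃ S, IsJordanStarAut S ∧ Set.InvOn S T H3O H3O := by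
  have hinv := hT.1.invOn_invFunOn
  set S := Function.invFunOn T H3O
  have hS : Set.BijOn S H3O H3O := hT.1.symm hinv.symm
  have eq_of {X Z : M3O} (hX : X ∈ H3O) (h : T X = Z) : S Z = X := h ▸ hinv.1 hX
  refine ⟨S, ⟨hS, fun X hX Y hY => ?_, fun c X hX => ?_, fun X hX Y hY => ?_, fun X hX => ?_⟩,
    hinv⟩
  · refine eq_of (H3OSubmodule.add_mem (hS.mapsTo hX) (hS.mapsTo hY)) ?_
    rw [hT.map_add (hS.mapsTo hX) (hS.mapsTo hY), hinv.2 hX, hinv.2 hY]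
  · refine eq_of (H3OSubmodule.smul_mem c (hS.mapsTo hX)) ?_
    rw [hT.map_smul c (hS.mapsTo hX), hinv.2 hX]
  · refine eq_of (jord_mem_H3O (hS.mapsTo hX) (hS.mapsTo hY)) ?_
    rw [hT.map_jord (hS.mapsTo hX) (hS.mapsTo hY), hinv.2 hX, hinv.2 hY]
  · refine eq_of (mstar_mem_H3O (hS.mapsTo hX)) ?_
    rw [hT.map_mstar (hS.mapsTo hX), hinv.2 hX]

theorem isMinProjO (hT : IsJordanStarAut T) {P : M3O} (hP : IsMinProjO P) :
    IsMinProjO (T P) := by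
  obtain ⟨⟨hmem, hstar, hidem⟩, hne, hmin⟩ := hP
  refine ⟨⟨hT.mem hmem, ?_, ?_⟩, fun h => ?_, fun Y hY => ?_⟩
  · rw [← hT.map_mstar hmem, hstar]
  · rw [← hT.map_jord hmem hmem, hidem]
  · exact hne (hT.1.injOn hmem H3OSubmodule.zero_mem (h.trans hT.map_zero.symm))
  · obtain ⟨X, hX, rfl⟩ := hT.1.surjOn hY
    obtain ⟨c, hc⟩ := hmin X hX
    exact ⟨c, by rw [← hT.map_trip hmem hX hmem, hc, hT.map_smul c hmem]⟩

end IsJordanStarAut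

/-- A Jordan `*`-automorphism of `C₆` that fixes every diagonal matrix. -/
structure IsDiagFixingAut (T : M3O → M3O) : Prop where
  aut : IsJordanStarAut T
  map_scalarDiag (d : Fin 3 → ℂ) : T (scalarDiag d) = scalarDiag d

theorem IsDiagFixingAut.comp {S T : M3O → M3O} (hS : IsDiagFixingAut S)
    (hT : IsDiagFixingAut T) : IsDiagFixingAut (S ∘ T) :=
  ⟨hS.aut.comp hT.aut, fun d => by
    rw [Function.comp_apply, hT.map_scalarDiag, hS.map_scalarDiag]⟩

/-! ### Normal forms of real quaternions and octonions -/

theorem exists_unitary_eq_norm_smul (x : ℍ[ℝ]) : ∃ u : unitary ℍ[ℝ], x = ‖x‖ • (u : ℍ[ℝ]) := by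
  obtain rfl | hx := eq_or_ne x 0
  · exact ⟨1, by simp⟩
  have hx' : ‖x‖ ≠ 0 := norm_ne_zero_iff.2 hx
  have hinv : (‖x‖⁻¹ * ‖x‖⁻¹) • ((normSq x : ℝ) : ℍ[ℝ]) = 1 := by
    rw [← Quaternion.coe_mul_eq_smul, ← Quaternion.coe_mul, Quaternion.normSq_eq_norm_mul_self,
      ← mul_inv, inv_mul_cancel₀ (mul_self_ne_zero.2 hx'), Quaternion.coe_one]
  refine ⟨⟨‖x‖⁻¹ • x, Unitary.mem_iff.2 ⟨?_, ?_⟩⟩, (smul_inv_smul₀ hx' x).symm⟩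
  · rw [Quaternion.star_smul, smul_mul_smul_comm, Quaternion.star_mul_self, hinv]
  · rw [Quaternion.star_smul, smul_mul_smul_comm, Quaternion.self_mul_star, hinv]

theorem exists_unitary_mul_eq_norm (x : ℍ[ℝ]) : ∃ u : unitary ℍ[ℝ], x * u = (‖x‖ : ℍ[ℝ]) := by
  obtain ⟨u, hu⟩ := exists_unitary_eq_norm_smul x
  refine ⟨star u, ?_⟩
  nth_rw 1 [hu]
  rw [smul_mul_assoc, Unitary.coe_star, Unitary.mul_star_self_of_mem u.2,
    ← Quaternion.coe_mul_eq_smul, mul_one]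

theorem exists_unitary_conj_eq_complex (x : ℍ[ℝ]) :
    ∃ u : unitary ℍ[ℝ], ∃ z : ℂ, u * x * star (u : ℍ[ℝ]) = z := by
  set n := √(x.imI ^ 2 + x.imJ ^ 2 + x.imK ^ 2)
  have hn : n ^ 2 = x.imI ^ 2 + x.imJ ^ 2 + x.imK ^ 2 := Real.sq_sqrt (by positivity)
  -- Since `(Im x)² = -n²`, the quaternion `w = n i + Im x` satisfies `w (Im x) = (n i) w`.
  obtain ⟨w, hre, hI, hJ, hK⟩ : ∃ w : ℍ[ℝ],
      w.re = 0 ∧ w.imI = n + x.imI ∧ w.imJ = x.imJ ∧ w.imK = x.imK :=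
    ⟨⟨0, n + x.imI, x.imJ, x.imK⟩, rfl, rfl, rfl, rfl⟩
  obtain rfl | hw := eq_or_ne w 0
  · exact ⟨1, ⟨x.re, x.imI⟩, by ext <;> simp [← hJ, ← hK]⟩
  obtain ⟨z, hzre, hzim⟩ : ∃ z : ℂ, z.re = x.re ∧ z.im = n := ⟨⟨x.re, n⟩, rfl, rfl⟩
  have hwx : w * x = z * w := by
    ext <;> simp only [Quaternion.re_mul, Quaternion.imI_mul, Quaternion.imJ_mul,
      Quaternion.imK_mul, re_coeComplex, imI_coeComplex, imJ_coeComplex, imK_coeComplex, hre, hI,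
      hJ, hK, hzre, hzim]
    · linear_combination hn
    all_goals ring
  obtain ⟨u, hu⟩ := exists_unitary_eq_norm_smul w
  refine ⟨u, z, ?_⟩
  have hux : (u : ℍ[ℝ]) * x = z * u := by
    rw [hu, smul_mul_assoc, mul_smul_comm] at hwx
    exact smul_right_injective _ (norm_ne_zero_iff.2 hw) hwx
  rw [hux, mul_assoc, Unitary.mul_star_self_of_mem u.2, mul_one]

/-- A complex-linear bijection of the octonions that preserves the product and both involutions,
that is, the complexification of an automorphism of `𝕆_ℝ`. -/
structure IsOctAut (g : Oct ≃ₗ[ℂ] Oct) : Prop where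
  map_omul (x y : Oct) : g (omul x y) = omul (g x) (g y)
  map_odia (x : Oct) : g (odia x) = odia (g x)
  map_obar (x : Oct) : g (obar x) = obar (g x)

namespace IsOctAut

variable {g h : Oct ≃ₗ[ℂ] Oct}

theorem symm (hg : IsOctAut g) : IsOctAut g.symm where
  map_omul x y := g.injective (by simp only [hg.map_omul, g.apply_symm_apply])
  map_odia x := g.injective (by simp only [hg.map_odia, g.apply_symm_apply])
  map_obar x := g.injective (by simp only [hg.map_obar, g.apply_symm_apply])

theorem trans (hg : IsOctAut g) (hh : IsOctAut h) : IsOctAut (g.trans h) where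
  map_omul x y := by simp only [LinearEquiv.trans_apply, hg.map_omul, hh.map_omul]
  map_odia x := by simp only [LinearEquiv.trans_apply, hg.map_odia, hh.map_odia]
  map_obar x := by simp only [LinearEquiv.trans_apply, hg.map_obar, hh.map_obar]

theorem map_oone (hg : IsOctAut g) : g oone = oone := by
  calc g oone = omul (g oone) (g (g.symm oone)) := by rw [g.apply_symm_apply, omul_oone]
    _ = oone := by rw [← hg.map_omul, oone_omul, g.apply_symm_apply]

theorem map_smul_oone (hg : IsOctAut g) (c : ℂ) : g (c • oone) = c • oone := by
  rw [map_smul, hg.map_oone]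

theorem mapMatrix_mem_H3O (hg : IsOctAut g) {X : M3O} (hX : X ∈ H3O) :
    g.toLinearMap.mapMatrix X ∈ H3O :=
  mem_H3O.2 fun i j => (hg.map_odia _).symm.trans (congrArg g (mem_H3O.1 hX i j))

theorem mapMatrix_jord (hg : IsOctAut g) (X Y : M3O) : g.toLinearMap.mapMatrix (jord X Y) =
    jord (g.toLinearMap.mapMatrix X) (g.toLinearMap.mapMatrix Y) := by
  ext1 i j
  simp only [LinearMap.mapMatrix_apply, map_apply, jord_apply, omulBilin_apply,
    LinearEquiv.coe_coe, map_smul, map_add, map_sum, hg.map_omul]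

theorem isDiagFixingAut (hg : IsOctAut g) : IsDiagFixingAut g.toLinearMap.mapMatrix where
  aut := by
    refine .of_invOn (S := g.symm.toLinearMap.mapMatrix) ⟨fun X _ => ?_, fun X _ => ?_⟩
      (fun X => hg.mapMatrix_mem_H3O) (fun X => hg.symm.mapMatrix_mem_H3O)
      (fun X _ Y _ => hg.mapMatrix_jord X Y) fun X _ => Matrix.ext fun i j => hg.map_obar _
    · exact Matrix.ext fun i j => g.symm_apply_apply _
    · exact Matrix.ext fun i j => g.apply_symm_apply _
  map_scalarDiag d := by
    ext1 i j
    obtain rfl | hij := eq_or_ne i j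
    · simp [scalarDiag_apply, hg.map_smul_oone, -map_smul]
    · simp [scalarDiag_apply, hij]

end IsOctAut

theorem quatToHC_star_mul_cancel (u : unitary ℍ[ℝ]) (x : HC) :
    star (quatToHC u) * (quatToHC u * x) = x := by
  rw [← mul_assoc, ← quatToHC_star, ← map_mul, Unitary.star_mul_self_of_mem u.2, map_one, one_mul]

theorem quatToHC_mul_star_cancel (u : unitary ℍ[ℝ]) (x : HC) :
    quatToHC u * (star (quatToHC u) * x) = x := by
  rw [← mul_assoc, ← quatToHC_star, ← map_mul, Unitary.mul_star_self_of_mem u.2, map_one, one_mul]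

/-- The linear map `(x₁, x₂) ↦ (u x₁ u⋄, u x₂ q)` for unit quaternions `u` and `q`, an automorphism
of the octonions that preserves `ℍ_ℂ × {0}`. -/
def unitQuatOctEquiv (u q : unitary ℍ[ℝ]) : Oct ≃ₗ[ℂ] Oct where
  toFun x := (quatToHC u * (x.1 * star (quatToHC u)), quatToHC u * (x.2 * quatToHC q))
  map_add' x y := by simp only [Prod.fst_add, Prod.snd_add, mul_add, add_mul, Prod.mk_add_mk]
  map_smul' c x := by
    simp only [Prod.smul_fst, Prod.smul_snd, mul_smul_comm, smul_mul_assoc, Prod.smul_mk,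
      RingHom.id_apply]
  invFun x :=
    (star (quatToHC u) * (x.1 * quatToHC u), star (quatToHC u) * (x.2 * star (quatToHC q)))
  left_inv x := by
    have hu := quatToHC_star_mul_cancel u 1
    have hq := quatToHC_mul_star_cancel q 1
    rw [mul_one] at hu hq
    simp only [mul_assoc, hu, hq, mul_one, quatToHC_star_mul_cancel]
  right_inv x := by
    have hu := quatToHC_mul_star_cancel u 1
    have hq := quatToHC_star_mul_cancel q 1
    rw [mul_one] at hu hq
    simp only [mul_assoc, hu, hq, mul_one, quatToHC_mul_star_cancel]

theorem unitQuatOctEquiv_apply (u q : unitary ℍ[ℝ]) (x : Oct) : unitQuatOctEquiv u q x =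
    (quatToHC u * (x.1 * star (quatToHC u)), quatToHC u * (x.2 * quatToHC q)) := rfl

theorem isOctAut_unitQuatOctEquiv (u q : unitary ℍ[ℝ]) : IsOctAut (unitQuatOctEquiv u q) where
  map_omul x y := by
    simp only [unitQuatOctEquiv_apply, omul_apply, star_mul, star_star, mul_add, sub_mul, add_mul,
      mul_sub, mul_assoc, quatToHC_star_mul_cancel, quatToHC_mul_star_cancel]
  map_odia x := by
    simp only [unitQuatOctEquiv_apply, odia_apply, star_mul, star_star, neg_mul, mul_neg,
      mul_assoc]
  map_obar x := by
    simp only [unitQuatOctEquiv_apply, obar, ← qbarHom_apply, map_mul, qbarHom_star]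
    simp only [qbarHom_apply, qbar_quatToHC]

theorem unitQuatOctEquiv_quat (u q : unitary ℍ[ℝ]) (x y : ℍ[ℝ]) :
    unitQuatOctEquiv u q (quatToHC x, quatToHC y) =
      (quatToHC (u * x * star (u : ℍ[ℝ])), quatToHC (u * y * q)) := by
  simp only [unitQuatOctEquiv_apply, map_mul, quatToHC_star, mul_assoc]

/-- The linear involution of the octonions that exchanges, up to sign, the second halves of the
coordinates of `x₁` with those of `x₂`. -/
def swapFun (x : Oct) : Oct :=
  (⟨x.1.re, x.1.imI, x.2.re, -x.2.imI⟩, ⟨x.1.imJ, -x.1.imK, -x.2.imJ, -x.2.imK⟩)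

section

variable (x : Oct)

@[simp] theorem swapFun_fst_re : (swapFun x).1.re = x.1.re := rfl
@[simp] theorem swapFun_fst_imI : (swapFun x).1.imI = x.1.imI := rfl
@[simp] theorem swapFun_fst_imJ : (swapFun x).1.imJ = x.2.re := rfl
@[simp] theorem swapFun_fst_imK : (swapFun x).1.imK = -x.2.imI := rfl
@[simp] theorem swapFun_snd_re : (swapFun x).2.re = x.1.imJ := rfl
@[simp] theorem swapFun_snd_imI : (swapFun x).2.imI = -x.1.imK := rfl
@[simp] theorem swapFun_snd_imJ : (swapFun x).2.imJ = -x.2.imJ := rfl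
@[simp] theorem swapFun_snd_imK : (swapFun x).2.imK = -x.2.imK := rfl

end

theorem swapFun_swapFun (x : Oct) : swapFun (swapFun x) = x := by
  refine Prod.ext ?_ ?_ <;> ext <;> simp

/-- An automorphism of the octonions of order two that moves the unit `(0, 1)` to `(j, 0)`. -/
def swapOctEquiv : Oct ≃ₗ[ℂ] Oct where
  toFun := swapFun
  map_add' x y := by refine Prod.ext ?_ ?_ <;> ext <;> simp <;> ring
  map_smul' c x := by refine Prod.ext ?_ ?_ <;> ext <;> simp
  invFun := swapFun
  left_inv := swapFun_swapFun
  right_inv := swapFun_swapFun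

theorem swapOctEquiv_apply (x : Oct) : swapOctEquiv x = swapFun x := rfl

theorem isOctAut_swapOctEquiv : IsOctAut swapOctEquiv where
  map_omul x y := by
    simp only [swapOctEquiv_apply, omul_apply]
    refine Prod.ext ?_ ?_ <;> ext <;> simp <;> ring
  map_odia x := by
    simp only [swapOctEquiv_apply, odia_apply]
    refine Prod.ext ?_ ?_ <;> ext <;> simp
  map_obar x := by
    simp only [swapOctEquiv_apply, obar]
    refine Prod.ext ?_ ?_ <;> ext <;> simp

theorem exists_swapOctEquiv_eq_quatToHC (z : ℂ) (r : ℝ) :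
    ∃ p, swapOctEquiv (quatToHC z, quatToHC r) = (quatToHC p, 0) := by
  obtain ⟨p, hre, hI, hJ, hK⟩ : ∃ p : ℍ[ℝ],
      p.re = z.re ∧ p.imI = z.im ∧ p.imJ = r ∧ p.imK = 0 :=
    ⟨⟨z.re, z.im, r, 0⟩, rfl, rfl, rfl, rfl⟩
  simp only [swapOctEquiv_apply, quatToHC_apply]
  refine ⟨p, Prod.ext ?_ ?_⟩ <;> ext <;> simp [hre, hI, hJ, hK]

theorem exists_quatToHC_pair_of_obar {x : Oct} (hx : obar x = x) :
    ∃ p q, (quatToHC p, quatToHC q) = x := by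
  obtain ⟨p, hp⟩ := exists_quatToHC_of_qbar congr(($hx).1)
  obtain ⟨q, hq⟩ := exists_quatToHC_of_qbar congr(($hx).2)
  exact ⟨p, q, Prod.ext hp hq⟩

theorem exists_isOctAut_eq_complex {x : Oct} (hx : obar x = x) :
    ∃ g, IsOctAut g ∧ ∃ z, g x = (complexToHC z, 0) := by
  obtain ⟨p, q, rfl⟩ := exists_quatToHC_pair_of_obar hx
  obtain ⟨u, z, hu⟩ := exists_unitary_conj_eq_complex p
  obtain ⟨v, hv⟩ := exists_unitary_mul_eq_norm (u * q)
  obtain ⟨t, ht⟩ := exists_swapOctEquiv_eq_quatToHC z ‖u * q‖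
  obtain ⟨w, c, hw⟩ := exists_unitary_conj_eq_complex t
  refine ⟨((unitQuatOctEquiv u v).trans swapOctEquiv).trans (unitQuatOctEquiv w 1),
    ((isOctAut_unitQuatOctEquiv u v).trans isOctAut_swapOctEquiv).trans
      (isOctAut_unitQuatOctEquiv w 1), c, ?_⟩
  rw [LinearEquiv.trans_apply, LinearEquiv.trans_apply, unitQuatOctEquiv_quat, hu, hv,
    ht, ← map_zero quatToHC, unitQuatOctEquiv_quat, hw, mul_zero, zero_mul]
  rfl

/-! ### Quaternionic unitary automorphisms -/

section SkewMatrix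

variable {R : Type*} [Ring R]

/-- The skew-symmetric `3 × 3` matrix with entries `± a k`, which encodes a cross product. -/
def skewMatrix (a : Fin 3 → R) : Matrix (Fin 3) (Fin 3) R :=
  !![0, a 2, -a 1; -a 2, 0, a 0; a 1, -a 0, 0]

theorem skewMatrix_transpose (a : Fin 3 → R) : (skewMatrix a)ᵀ = -skewMatrix a := by
  ext i j
  fin_cases i <;> fin_cases j <;> simp [skewMatrix]

theorem skewMatrix_add (a b : Fin 3 → R) : skewMatrix (a + b) = skewMatrix a + skewMatrix b := by
  ext i j
  fin_cases i <;> fin_cases j <;> simp [skewMatrix, add_comm]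

theorem skewMatrix_zero : skewMatrix (0 : Fin 3 → R) = 0 := by
  ext i j
  fin_cases i <;> fin_cases j <;> simp [skewMatrix]

theorem skewMatrix_smul {S : Type*} [Monoid S] [DistribMulAction S R] (c : S) (a : Fin 3 → R) :
    skewMatrix (c • a) = c • skewMatrix a := by
  ext i j
  fin_cases i <;> fin_cases j <;> simp [skewMatrix]

theorem skewMatrix_map {S : Type*} [Ring S] (f : R →+* S) (a : Fin 3 → R) :
    (skewMatrix a).map f = skewMatrix (f ∘ a) := by
  ext i j
  fin_cases i <;> fin_cases j <;> simp [skewMatrix]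

theorem sum_skewMatrix_mul_star_skewMatrix [StarRing R] (a b : Fin 3 → R) (i j : Fin 3) :
    ∑ k, skewMatrix b k j * star (skewMatrix a i k) =
      b i * star (a j) - diagonal (fun _ => ∑ k, b k * star (a k)) i j := by
  fin_cases i <;> fin_cases j <;> simp [skewMatrix, Fin.sum_univ_three] <;> abel

theorem sum_mul_skewMatrix_add (M : Matrix (Fin 3) (Fin 3) R) (b : Fin 3 → R) (i j : Fin 3) :
    ∑ k, (M k i * skewMatrix b k j + M k j * skewMatrix b i k) =
      skewMatrix (fun k => M.trace * b k - (M *ᵥ b) k) i j := by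
  fin_cases i <;> fin_cases j <;>
    simp [skewMatrix, Fin.sum_univ_three, trace, mulVec, dotProduct, add_mul, sub_eq_add_neg] <;>
    abel

end SkewMatrix

/-- The octonion matrix with entries `(M i j, ± a k)`. The elements of `H₃(𝕆)` are exactly these
matrices for Hermitian `M`. -/
def ofParts (M : Matrix (Fin 3) (Fin 3) HC) (a : Fin 3 → HC) : M3O :=
  of fun i j => (M i j, skewMatrix a i j)

theorem ofParts_apply (M : Matrix (Fin 3) (Fin 3) HC) (a : Fin 3 → HC) (i j : Fin 3) :
    ofParts M a i j = (M i j, skewMatrix a i j) := rfl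

/-- The first Cayley–Dickson components of a matrix of octonions. -/
def quatPart (X : M3O) : Matrix (Fin 3) (Fin 3) HC := X.map Prod.fst

/-- The three independent second Cayley–Dickson components of an element of `H₃(𝕆)`. -/
def skewVec (X : M3O) (k : Fin 3) : HC := (X (k + 1) (k + 2)).2

theorem skewVec_ofParts (M : Matrix (Fin 3) (Fin 3) HC) (a : Fin 3 → HC) :
    skewVec (ofParts M a) = a := by
  ext1 k
  fin_cases k <;> rfl

theorem ofParts_mem_H3O {M : Matrix (Fin 3) (Fin 3) HC} (hM : M.IsHermitian) (a : Fin 3 → HC) :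
    ofParts M a ∈ H3O :=
  mem_H3O.2 fun i j => (odia_apply _).trans (Prod.ext (hM.apply i j)
    (by
    rw [ofParts_apply, ← transpose_apply (skewMatrix a), skewMatrix_transpose]
    exact neg_neg _))

theorem exists_eq_ofParts {X : M3O} (hX : X ∈ H3O) :
    ∃ M a, M.IsHermitian ∧ X = ofParts M a := by
  have hX' (i j : Fin 3) : (star (X j i).1, -(X j i).2) = X i j :=
    (odia_apply _).symm.trans (mem_H3O.1 hX i j)
  have hsnd (i j : Fin 3) : (X i j).2 = -(X j i).2 := congr(($(hX' i j)).2).symm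
  have hzero (i : Fin 3) : (X i i).2 = 0 :=
    have : IsAddTorsionFree HC := .of_module_rat _
    self_eq_neg.1 (hsnd i i)
  refine ⟨quatPart X, skewVec X, IsHermitian.ext fun i j => congr(($(hX' i j)).1), ?_⟩
  refine Matrix.ext fun i j => Prod.ext rfl ?_
  fin_cases i <;> fin_cases j
  exacts [hzero 0, rfl, hsnd 0 2, hsnd 1 0, hzero 1, rfl, rfl, hsnd 2 1, hzero 2]

/-- The real part of the trace. Unlike the trace of a biquaternionic matrix, it is invariant under
cyclic permutations. -/
def reTrace (M : Matrix (Fin 3) (Fin 3) HC) : ℂ := ∑ i, (M i i).re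

theorem reTrace_mul_comm (M N : Matrix (Fin 3) (Fin 3) HC) : reTrace (M * N) = reTrace (N * M) := by
  have re_sum (f : Fin 3 → HC) : (∑ k, f k).re = ∑ k, (f k).re := by
    simp only [Fin.sum_univ_three, Quaternion.re_add]
  simp only [reTrace, mul_apply, re_sum]
  rw [Finset.sum_comm]
  simp only [re_mul_comm (N _ _)]

theorem trace_eq_reTrace_smul_one {M : Matrix (Fin 3) (Fin 3) HC} (hM : M.IsHermitian) :
    M.trace = reTrace M • (1 : HC) := by
  rw [reTrace, Finset.sum_smul]
  exact Finset.sum_congr rfl fun i _ => eq_smul_one_of_star_eq (hM.apply i i)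

/-- The term `a b⋄ + b a⋄` of the Jordan product of two elements of `H₃(𝕆)`. -/
def symOuter (a b : Fin 3 → HC) : Matrix (Fin 3) (Fin 3) HC :=
  vecMulVec a (star b) + vecMulVec b (star a)

theorem isHermitian_symOuter (a b : Fin 3 → HC) : (symOuter a b).IsHermitian := by
  rw [symOuter, IsHermitian, conjTranspose_add, conjTranspose_vecMulVec, conjTranspose_vecMulVec,
    star_star, star_star, add_comm]

theorem jord_ofParts {M N : Matrix (Fin 3) (Fin 3) HC} (hM : M.IsHermitian) (hN : N.IsHermitian)
    (a b : Fin 3 → HC) : jord (ofParts M a) (ofParts N b) = (2⁻¹ : ℂ) • ofParts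
      (M * N + N * M - symOuter a b + reTrace (symOuter a b) • 1)
      (reTrace M • b - M *ᵥ b + (reTrace N • a - N *ᵥ a)) := by
  have outer (i j : Fin 3) : (reTrace (symOuter a b) • (1 : Matrix (Fin 3) (Fin 3) HC)) i j =
      diagonal (fun _ => ∑ k, b k * star (a k)) i j +
        diagonal (fun _ => ∑ k, a k * star (b k)) i j := by
    obtain rfl | hij := eq_or_ne i j
    · rw [Matrix.smul_apply, one_apply_eq, ← trace_eq_reTrace_smul_one (isHermitian_symOuter a b),
        diagonal_apply_eq, diagonal_apply_eq, ← Finset.sum_add_distrib]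
      simp only [trace, diag_apply, symOuter, Matrix.add_apply, vecMulVec_apply, Pi.star_apply,
        add_comm]
    · simp [hij]
  have hskew {M : Matrix (Fin 3) (Fin 3) HC} (hM : M.IsHermitian) (b : Fin 3 → HC) (i j : Fin 3) :
      ∑ k, star (M i k) * skewMatrix b k j + ∑ k, M k j * skewMatrix b i k =
        skewMatrix (reTrace M • b - M *ᵥ b) i j := by
    simp only [hM.apply, ← Finset.sum_add_distrib, sum_mul_skewMatrix_add,
      trace_eq_reTrace_smul_one hM, smul_mul_assoc, one_mul]
    rfl
  ext1 i j
  rw [jord_apply]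
  refine congrArg ((2⁻¹ : ℂ) • ·) (Prod.ext ?_ ?_)
  · simp only [Prod.fst_add, Prod.fst_sum, omulBilin_apply, omul_apply, ofParts_apply,
      Finset.sum_sub_distrib, sum_skewMatrix_mul_star_skewMatrix, Matrix.add_apply,
      Matrix.sub_apply, mul_apply, outer]
    simp only [symOuter, Matrix.add_apply, vecMulVec_apply, Pi.star_apply]
    abel
  · simp only [Prod.snd_add, Prod.snd_sum, omulBilin_apply, omul_apply, ofParts_apply,
      Finset.sum_add_distrib]
    rw [skewMatrix_add, Matrix.add_apply, ← hskew hM, ← hskew hN]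
    abel

theorem mstar_ofParts (M : Matrix (Fin 3) (Fin 3) HC) (a : Fin 3 → HC) :
    mstar (ofParts M a) = ofParts (M.map qbarHom) (qbarHom ∘ a) := by
  refine Matrix.ext fun i j => Prod.ext rfl ?_
  rw [ofParts_apply, ← skewMatrix_map]
  rfl

/-- A matrix with real quaternionic entries that is unitary, that is, an element of the compact
symplectic group `Sp(3)`. -/
structure IsQuatUnitary (V : Matrix (Fin 3) (Fin 3) HC) : Prop where
  star_mul_self : Vᴴ * V = 1
  mul_star_self : V * Vᴴ = 1
  map_qbarHom : V.map qbarHom = V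

/-- The action `M ↦ V M Vᴴ`, `a ↦ V a` of a matrix `V` on the two parts of an element of
`H₃(𝕆)`. -/
def conjAct (V : Matrix (Fin 3) (Fin 3) HC) : M3O →ₗ[ℂ] M3O where
  toFun X := ofParts (V * quatPart X * Vᴴ) (V *ᵥ skewVec X)
  map_add' X Y := by
    have hq : quatPart (X + Y) = quatPart X + quatPart Y := rfl
    have hs : skewVec (X + Y) = skewVec X + skewVec Y := rfl
    refine Matrix.ext fun i j => Prod.ext ?_ ?_
    · simp only [hq, ofParts_apply, mul_add, add_mul, Matrix.add_apply, Prod.fst_add]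
    · simp only [hs, ofParts_apply, mulVec_add, skewMatrix_add, Matrix.add_apply, Prod.snd_add]
  map_smul' c X := by
    have hq : quatPart (c • X) = c • quatPart X := rfl
    have hs : skewVec (c • X) = c • skewVec X := rfl
    refine Matrix.ext fun i j => Prod.ext ?_ ?_
    · simp only [hq, ofParts_apply, Matrix.mul_smul, Matrix.smul_mul, Matrix.smul_apply,
        Prod.smul_fst, RingHom.id_apply]
    · simp only [hs, ofParts_apply, mulVec_smul, skewMatrix_smul, Matrix.smul_apply,
        Prod.smul_snd, RingHom.id_apply]

theorem conjAct_ofParts (V M : Matrix (Fin 3) (Fin 3) HC) (a : Fin 3 → HC) :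
    conjAct V (ofParts M a) = ofParts (V * M * Vᴴ) (V *ᵥ a) := by
  refine congrArg₂ ofParts rfl ?_
  rw [skewVec_ofParts]

namespace IsQuatUnitary

variable {V : Matrix (Fin 3) (Fin 3) HC}

theorem conjTranspose (hV : IsQuatUnitary V) : IsQuatUnitary Vᴴ where
  star_mul_self := by rw [conjTranspose_conjTranspose, hV.mul_star_self]
  mul_star_self := by rw [conjTranspose_conjTranspose, hV.star_mul_self]
  map_qbarHom := by rw [conjTranspose_map _ qbarHom_star, hV.map_qbarHom]

theorem leftInvOn (hV : IsQuatUnitary V) : Set.LeftInvOn (conjAct Vᴴ) (conjAct V) H3O := by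
  intro X hX
  obtain ⟨M, a, -, rfl⟩ := exists_eq_ofParts hX
  rw [conjAct_ofParts, conjAct_ofParts, conjTranspose_conjTranspose, mulVec_mulVec,
    hV.star_mul_self, one_mulVec, ← mul_assoc, ← mul_assoc, hV.star_mul_self, one_mul, mul_assoc,
    hV.star_mul_self, mul_one]

theorem mapsTo (V : Matrix (Fin 3) (Fin 3) HC) : Set.MapsTo (conjAct V) H3O H3O := by
  intro X hX
  obtain ⟨M, a, hM, rfl⟩ := exists_eq_ofParts hX
  rw [conjAct_ofParts]
  exact ofParts_mem_H3O (isHermitian_mul_mul_conjTranspose V hM) _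

theorem reTrace_conj (hV : IsQuatUnitary V) (M : Matrix (Fin 3) (Fin 3) HC) :
    reTrace (V * M * Vᴴ) = reTrace M := by
  rw [reTrace_mul_comm, ← mul_assoc, hV.star_mul_self, one_mul]

theorem symOuter_mulVec (V : Matrix (Fin 3) (Fin 3) HC) (a b : Fin 3 → HC) :
    symOuter (V *ᵥ a) (V *ᵥ b) = V * symOuter a b * Vᴴ := by
  simp only [symOuter, star_mulVec, mul_add, add_mul, mul_vecMulVec, vecMulVec_mul]

theorem conjAct_jord (hV : IsQuatUnitary V) {X Y : M3O} (hX : X ∈ H3O) (hY : Y ∈ H3O) :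
    conjAct V (jord X Y) = jord (conjAct V X) (conjAct V Y) := by
  obtain ⟨M, a, hM, rfl⟩ := exists_eq_ofParts hX
  obtain ⟨N, b, hN, rfl⟩ := exists_eq_ofParts hY
  have conj_mul (M N : Matrix (Fin 3) (Fin 3) HC) :
      V * (M * N) * Vᴴ = V * M * Vᴴ * (V * N * Vᴴ) := by
    simp only [mul_assoc, ← mul_assoc Vᴴ V, hV.star_mul_self, one_mul]
  have conj_mulVec (M : Matrix (Fin 3) (Fin 3) HC) (b : Fin 3 → HC) :
      V *ᵥ M *ᵥ b = (V * M * Vᴴ) *ᵥ V *ᵥ b := by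
    simp only [mulVec_mulVec, mul_assoc, hV.star_mul_self, mul_one]
  rw [jord_ofParts hM hN, map_smul, conjAct_ofParts, conjAct_ofParts, conjAct_ofParts,
    jord_ofParts (isHermitian_mul_mul_conjTranspose V hM)
      (isHermitian_mul_mul_conjTranspose V hN), symOuter_mulVec]
  simp only [hV.reTrace_conj, mul_add, mul_sub, add_mul, sub_mul, conj_mul, mulVec_add, mulVec_sub,
    mulVec_smul, conj_mulVec, Matrix.mul_smul, Matrix.smul_mul, mul_one, hV.mul_star_self]

theorem conjAct_mstar (hV : IsQuatUnitary V) {X : M3O} (hX : X ∈ H3O) :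
    conjAct V (mstar X) = mstar (conjAct V X) := by
  obtain ⟨M, a, -, rfl⟩ := exists_eq_ofParts hX
  rw [mstar_ofParts, conjAct_ofParts, conjAct_ofParts, mstar_ofParts, Matrix.map_mul,
    Matrix.map_mul, hV.map_qbarHom, hV.conjTranspose.map_qbarHom]
  congr 1
  ext1 i
  rw [Function.comp_apply, RingHom.map_mulVec, hV.map_qbarHom]

theorem isJordanStarAut (hV : IsQuatUnitary V) : IsJordanStarAut (conjAct V) := by
  have hright := hV.conjTranspose.leftInvOn
  rw [conjTranspose_conjTranspose] at hright
  exact .of_invOn ⟨hV.leftInvOn, hright⟩ (mapsTo V) (mapsTo Vᴴ)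
    (fun X hX Y hY => hV.conjAct_jord hX hY)
    fun X hX => hV.conjAct_mstar hX

end IsQuatUnitary

/-! ### Complex matrices in the octonion matrices -/

/-- The complex number `a + b i` as the octonion `(a + b i, 0)`, where `i` is a quaternion unit. -/
def complexToOct : ℂ →+ Oct := (AddMonoidHom.inl HC HC).comp complexToHC.toAddMonoidHom

theorem complexToOct_apply (z : ℂ) : complexToOct z = (complexToHC z, 0) := rfl

theorem complexToOct_injective : Function.Injective complexToOct := fun _ _ h =>
  complexToHC_injective congr(($h).1)

theorem complexToOct_ofReal (r : ℝ) : complexToOct r = (r : ℂ) • oone := by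
  rw [complexToOct_apply, complexToHC_ofReal, oone, Prod.smul_mk, smul_zero]

theorem complexToOct_conj (z : ℂ) : complexToOct (conj z) = odia (complexToOct z) := by
  rw [odia_apply, complexToOct_apply, complexToOct_apply, complexToHC_conj, neg_zero]

theorem obar_complexToOct (z : ℂ) : obar (complexToOct z) = complexToOct z :=
  Prod.ext (qbar_complexToHC z) (map_zero qbarHom)

theorem omul_complexToOct (z w : ℂ) :
    omul (complexToOct z) (complexToOct w) = complexToOct (z * w) := by
  simp only [omul_apply, complexToOct_apply, zero_mul, mul_zero, sub_zero, add_zero, map_mul]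

theorem smul_complexToOct (r : ℝ) (z : ℂ) : (r : ℂ) • complexToOct z = complexToOct (r * z) := by
  simp only [complexToOct_apply, map_mul, complexToHC_ofReal, smul_mul_assoc, one_mul, Prod.smul_mk,
    smul_zero]

/-- The entrywise inclusion of the complex matrices into the octonion matrices. It is only
`ℝ`-linear, since the imaginary unit goes to a quaternion unit. -/
def emb : Matrix (Fin 3) (Fin 3) ℂ →+ M3O := complexToOct.mapMatrix

theorem emb_apply (C : Matrix (Fin 3) (Fin 3) ℂ) (i j : Fin 3) :
    emb C i j = complexToOct (C i j) := rfl

theorem emb_eq_ofParts (C : Matrix (Fin 3) (Fin 3) ℂ) :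
    emb C = ofParts (C.map complexToHC) 0 := by
  ext1 i j
  rw [ofParts_apply, skewMatrix_zero]
  rfl

theorem emb_injective : Function.Injective emb :=
  Matrix.map_injective complexToOct_injective

theorem emb_mem_H3O_iff {C : Matrix (Fin 3) (Fin 3) ℂ} : emb C ∈ H3O ↔ C.IsHermitian := by
  simp only [mem_H3O, emb_apply, ← complexToOct_conj, complexToOct_injective.eq_iff,
    IsHermitian.ext_iff]
  rfl

theorem mstar_emb (C : Matrix (Fin 3) (Fin 3) ℂ) : mstar (emb C) = emb C :=
  Matrix.ext fun _ _ => obar_complexToOct _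

theorem jord_emb (C D : Matrix (Fin 3) (Fin 3) ℂ) :
    jord (emb C) (emb D) = emb ((2⁻¹ : ℂ) • (C * D + D * C)) := by
  ext1 i j
  have h := smul_complexToOct 2⁻¹ ((C * D + D * C) i j)
  rw [Complex.ofReal_inv, Complex.ofReal_ofNat] at h
  simp only [jord_apply, emb_apply, omulBilin_apply, omul_complexToOct, ← map_sum]
  exact (congrArg _ (map_add complexToOct _ _).symm).trans h

theorem trip_emb (C D : Matrix (Fin 3) (Fin 3) ℂ) :
    trip (emb C) (emb D) (emb C) = emb (C * D * C) := by
  simp only [trip, mstar_emb, jord_emb, ← map_add, ← map_sub]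
  congr 1
  simp only [Matrix.smul_mul, Matrix.mul_smul, ← smul_add, smul_smul, mul_add, add_mul,
    ← mul_assoc]
  module

theorem scalarDiag_eq_ofParts (d : Fin 3 → ℂ) :
    scalarDiag d = ofParts (diagonal fun i => d i • 1) 0 := by
  ext1 i j
  rw [ofParts_apply, skewMatrix_zero]
  obtain rfl | hij := eq_or_ne i j
  · simp [scalarDiag_apply, oone]
  · simp [scalarDiag_apply, hij, Prod.zero_eq_mk]

theorem emb_diagonal_ofReal (d : Fin 3 → ℝ) :
    emb (diagonal fun i => (d i : ℂ)) = scalarDiag fun i => d i := by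
  ext1 i j
  obtain rfl | hij := eq_or_ne i j
  · simp [emb_apply, scalarDiag_apply, complexToOct_ofReal, -Complex.coe_smul]
  · simp [emb_apply, scalarDiag_apply, hij]

theorem isQuatUnitary_map {V : Matrix (Fin 3) (Fin 3) ℂ}
    (hV : V ∈ unitary (Matrix (Fin 3) (Fin 3) ℂ)) : IsQuatUnitary (V.map complexToHC) where
  star_mul_self := by
    rw [← conjTranspose_map _ complexToHC_conj, ← Matrix.map_mul, ← star_eq_conjTranspose,
      Unitary.star_mul_self_of_mem hV, Matrix.map_one _ (map_zero _) (map_one _)]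
  mul_star_self := by
    rw [← conjTranspose_map _ complexToHC_conj, ← Matrix.map_mul, ← star_eq_conjTranspose,
      Unitary.mul_star_self_of_mem hV, Matrix.map_one _ (map_zero _) (map_one _)]
  map_qbarHom := Matrix.ext fun _ _ => qbar_complexToHC _

theorem conjAct_emb (V C : Matrix (Fin 3) (Fin 3) ℂ) :
    conjAct (V.map complexToHC) (emb C) = emb (V * C * Vᴴ) := by
  rw [emb_eq_ofParts, conjAct_ofParts, emb_eq_ofParts, Matrix.map_mul, Matrix.map_mul,
    conjTranspose_map _ complexToHC_conj, mulVec_zero]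

theorem conjAct_diagonal_apply {p : Fin 3 → ℂ} {X : M3O} (hX : X ∈ H3O) {i j : Fin 3} {z : ℂ}
    (h : X i j = complexToOct z) :
    conjAct ((diagonal p).map complexToHC) X i j = complexToOct (p i * z * conj (p j)) := by
  obtain ⟨M, a, -, rfl⟩ := exists_eq_ofParts hX
  have hskew (v : Fin 3 → HC) (hij : skewMatrix a i j = 0) :
      skewMatrix (diagonal v *ᵥ a) i j = 0 := by
    fin_cases i <;> fin_cases j <;> simp_all [skewMatrix, mulVec_diagonal]
  rw [diagonal_map (map_zero complexToHC), conjAct_ofParts, ofParts_apply,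
    hskew _ congr(($h).2), diagonal_conjTranspose, mul_diagonal, diagonal_mul,
    show M i j = complexToHC z from congr(($h).1), complexToOct_apply, map_mul, map_mul,
    complexToHC_conj]
  rfl

theorem isDiagFixingAut_diagonal {p : Fin 3 → ℂ} (hp : ∀ i, ‖p i‖ = 1) :
    IsDiagFixingAut (conjAct ((diagonal p).map complexToHC)) where
  aut := by
    have hp' (i : Fin 3) : p i * conj (p i) = 1 := by simp [Complex.mul_conj', hp]
    refine (isQuatUnitary_map (Unitary.mem_iff.2 ⟨?_, ?_⟩)).isJordanStarAut
    · simp [star_eq_conjTranspose, diagonal_conjTranspose, hp', mul_comm]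
    · simp [star_eq_conjTranspose, diagonal_conjTranspose, hp']
  map_scalarDiag d := by
    have hp' (i : Fin 3) : complexToHC (p i) * star (complexToHC (p i)) = 1 := by
      rw [← complexToHC_conj, ← map_mul, Complex.mul_conj', hp]
      simp
    rw [scalarDiag_eq_ofParts, diagonal_map (map_zero complexToHC), conjAct_ofParts,
      diagonal_conjTranspose, diagonal_mul_diagonal, diagonal_mul_diagonal, mulVec_zero]
    simp only [Pi.star_apply, mul_smul_comm, smul_mul_assoc, mul_one, hp']

theorem exists_isDiagFixingAut_apply_eq_real {X : M3O} (hX : X ∈ H3O) (hstar : mstar X = X)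
    {k l : Fin 3} (hkl : k ≠ l) : ∃ T, IsDiagFixingAut T ∧ (∃ r : ℝ, T X k l = (r : ℂ) • oone) ∧
      ∀ i j, i ≠ l → j ≠ l → ∀ r : ℝ, X i j = (r : ℂ) • oone → T X i j = (r : ℂ) • oone := by
  obtain ⟨g, hg, z, hz⟩ := exists_isOctAut_eq_complex congr($hstar k l)
  obtain ⟨c, hc, hcz⟩ := Complex.exists_norm_eq_mul_self z
  set p : Fin 3 → ℂ := Function.update 1 l (conj c)
  have hp (i : Fin 3) : ‖p i‖ = 1 := by
    obtain rfl | hil := eq_or_ne i l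
    · simp [p, hc]
    · simp [p, hil]
  have hpne {i : Fin 3} (hil : i ≠ l) : p i = 1 := by simp [p, hil]
  have hXg := hg.mapMatrix_mem_H3O hX
  refine ⟨_, (isDiagFixingAut_diagonal hp).comp hg.isDiagFixingAut, ⟨‖z‖, ?_⟩,
    fun i j hil hjl r hr => ?_⟩
  · rw [Function.comp_apply, conjAct_diagonal_apply hXg hz, ← complexToOct_ofReal, hcz, hpne hkl]
    simp [p, mul_comm]
  · rw [Function.comp_apply, conjAct_diagonal_apply hXg (z := r), hpne hil, hpne hjl]
    · simp [complexToOct_ofReal, -Complex.coe_smul]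
    · rw [LinearMap.mapMatrix_apply, map_apply, hr, complexToOct_ofReal]
      exact hg.map_smul_oone r

theorem exists_eq_emb_of_lt {X : M3O} (hX : X ∈ H3O) (hstar : mstar X = X)
    (h : ∀ i j, i < j → ∃ z, X i j = complexToOct z) : ∃ C, C.IsHermitian ∧ X = emb C := by
  have entry (i j : Fin 3) : ∃ z, X i j = complexToOct z := by
    obtain hij | rfl | hji := lt_trichotomy i j
    · exact h i j hij
    · have hreal : conj (X i i).1.re = (X i i).1.re := congr(($hstar i i).1.re)
      refine ⟨(X i i).1.re, ?_⟩
      rw [← Complex.conj_eq_iff_re.1 hreal, complexToOct_ofReal, Complex.conj_eq_iff_re.1 hreal,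
        ← apply_self_eq_re_smul_oone hX]
    · obtain ⟨z, hz⟩ := h j i hji
      exact ⟨conj z, by rw [complexToOct_conj, ← hz, mem_H3O.1 hX]⟩
  choose C hC using entry
  obtain rfl : X = emb (of C) := Matrix.ext hC
  exact ⟨of C, emb_mem_H3O_iff.1 hX, rfl⟩

theorem exists_isDiagFixingAut_eq_emb {X : M3O} (hX : X ∈ H3O) (hstar : mstar X = X) :
    ∃ T, IsDiagFixingAut T ∧ ∃ C, C.IsHermitian ∧ T X = emb C := by
  obtain ⟨T₁, hT₁, ⟨r, hr⟩, -⟩ :=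
    exists_isDiagFixingAut_apply_eq_real hX hstar (k := 0) (l := 1) (by decide)
  have hX₁ := hT₁.aut.mem hX
  have hstar₁ : mstar (T₁ X) = T₁ X := by rw [← hT₁.aut.map_mstar hX, hstar]
  obtain ⟨T₂, hT₂, ⟨s, hs⟩, hkeep⟩ :=
    exists_isDiagFixingAut_apply_eq_real hX₁ hstar₁ (k := 0) (l := 2) (by decide)
  have hX₂ := hT₂.aut.mem hX₁
  have hstar₂ : mstar (T₂ (T₁ X)) = T₂ (T₁ X) := by rw [← hT₂.aut.map_mstar hX₁, hstar₁]
  obtain ⟨g, hg, z, hz⟩ := exists_isOctAut_eq_complex congr($hstar₂ 1 2)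
  have hT₃ := hg.isDiagFixingAut
  refine ⟨_, hT₃.comp (hT₂.comp hT₁), exists_eq_emb_of_lt (hT₃.aut.mem hX₂) ?_ fun i j hij => ?_⟩
  · rw [Function.comp_apply, Function.comp_apply, ← hT₃.aut.map_mstar hX₂, hstar₂]
  · have hreal {t : ℝ} (ht : T₂ (T₁ X) i j = (t : ℂ) • oone) :
        g (T₂ (T₁ X) i j) = complexToOct t := by
      rw [ht, hg.map_smul_oone, complexToOct_ofReal]
    fin_cases i <;> fin_cases j <;> first | exact absurd hij (by decide) | skip
    · exact ⟨r, hreal (hkeep 0 1 (by decide) (by decide) r hr)⟩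
    · exact ⟨s, hreal hs⟩
    · exact ⟨z, hz⟩

/-! ### Commuting Hermitian matrices -/

section CommutingHermitian

variable {𝕜 E n : Type*} [RCLike 𝕜] [NormedAddCommGroup E] [InnerProductSpace 𝕜 E]
  [FiniteDimensional 𝕜 E] [Fintype n]

theorem exists_orthonormalBasis_apply_eq_smul_of_commute {A B : E →ₗ[𝕜] E} (hA : A.IsSymmetric)
    (hB : B.IsSymmetric) (hAB : Commute A B) (hn : Module.finrank 𝕜 E = Fintype.card n) :
    ∃ (b : OrthonormalBasis n 𝕜 E) (α β : n → 𝕜),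
      ∀ i, A (b i) = α i • b i ∧ B (b i) = β i • b i := by
  classical
  have hsum := hA.directSum_isInternal_of_commute hB hAB
  have horth := hA.orthogonalFamily_eigenspace_inf_eigenspace hB
  let v (μ : 𝕜 × 𝕜) := stdOrthonormalBasis 𝕜
    (Module.End.eigenspace A μ.2 ⊓ Module.End.eigenspace B μ.1 : Submodule 𝕜 E)
  let u := hsum.collectedBasis fun μ => (v μ).toBasis
  have hu : Orthonormal 𝕜 u := hsum.collectedBasis_orthonormal horth fun μ => by simp
  have := FiniteDimensional.fintypeBasisIndex u
  have e := Fintype.equivOfCardEq ((Module.finrank_eq_card_basis u).symm.trans hn)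
  let b : OrthonormalBasis n 𝕜 E := (u.toOrthonormalBasis hu).reindex e
  have hmem (i : n) : b i ∈ Module.End.eigenspace A (e.symm i).1.2 ⊓
      Module.End.eigenspace B (e.symm i).1.1 := by simp [b, u]
  exact ⟨b, fun i => (e.symm i).1.2, fun i => (e.symm i).1.1, fun i =>
    ⟨Module.End.mem_eigenspace_iff.1 (hmem i).1, Module.End.mem_eigenspace_iff.1 (hmem i).2⟩⟩

theorem exists_mem_unitary_conj_eq_diagonal_of_commute [DecidableEq n]
    {C D : Matrix n n 𝕜} (hC : C.IsHermitian) (hD : D.IsHermitian) (hCD : Commute C D) :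
    ∃ V ∈ unitary (Matrix n n 𝕜), ∃ c d : n → ℝ,
      V * C * Vᴴ = diagonal (fun i => (c i : 𝕜)) ∧ V * D * Vᴴ = diagonal fun i => (d i : 𝕜) := by
  obtain ⟨b, γ, δ, hb⟩ := exists_orthonormalBasis_apply_eq_smul_of_commute
    (isSymmetric_toEuclideanLin_iff.2 hC) (isSymmetric_toEuclideanLin_iff.2 hD)
    (LinearMap.ext fun x => by simp [toLpLin_apply, hCD.eq]) finrank_euclideanSpace
  set W := (EuclideanSpace.basisFun n 𝕜).toBasis.toMatrix b
  have hW : W ∈ unitary (Matrix n n 𝕜) :=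
    (EuclideanSpace.basisFun n 𝕜).toMatrix_orthonormalBasis_mem_unitary b
  have conj_eq {M : Matrix n n 𝕜} {μ : n → 𝕜} (hM : M.IsHermitian)
      (h : ∀ i, toEuclideanLin M (b i) = μ i • b i) :
      Wᴴ * M * Wᴴᴴ = diagonal fun i => (RCLike.re (μ i) : 𝕜) := by
    have hdiag : Wᴴ * M * Wᴴᴴ = diagonal μ := by
      have hMW : M * W = W * diagonal μ := by
        ext i j
        simpa [W, mul_comm] using! congr($(h j).ofLp i)
      rw [conjTranspose_conjTranspose, mul_assoc, hMW, ← mul_assoc, ← star_eq_conjTranspose,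
        Unitary.star_mul_self_of_mem hW, one_mul]
    have hreal := isHermitian_diagonal_iff.1 (hdiag ▸ isHermitian_mul_mul_conjTranspose Wᴴ hM)
    simp_rw [hdiag, RCLike.conj_eq_iff_re.1 (hreal _)]
  exact ⟨Wᴴ, Unitary.star_mem hW, _, _, conj_eq hC fun i => (hb i).1, conj_eq hD fun i => (hb i).2⟩

theorem commute_of_forall_isHermitian {K : Matrix n n ℂ}
    (h : ∀ X : Matrix n n ℂ, X.IsHermitian → Commute X K) (X : Matrix n n ℂ) : Commute X K := by
  classical
  rw [← realPart_add_I_smul_imaginaryPart X]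
  exact (h _ (realPart X).2).add_left ((h _ (imaginaryPart X).2).smul_left _)

theorem commute_of_forall_commute_commutator {C D : Matrix n n ℂ}
    (h : ∀ X : Matrix n n ℂ, X.IsHermitian → Commute X (C * D - D * C)) : Commute C D := by
  classical
  obtain ⟨k, hk⟩ := mem_range_scalar_of_commute_single fun _ _ _ =>
    commute_of_forall_isHermitian h _
  have htrace : Fintype.card n * k = 0 := by
    calc Fintype.card n * k = (scalar n k).trace := by simp
      _ = 0 := by rw [hk, trace_sub, trace_mul_comm, sub_self]
  refine sub_eq_zero.1 (hk.symm.trans ?_)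
  obtain hn | rfl := mul_eq_zero.1 htrace
  · have := Fintype.card_eq_zero_iff.1 (Nat.cast_eq_zero.1 hn)
    exact Subsingleton.elim _ _
  · exact map_zero _

end CommutingHermitian

/-! ### The spectral theorem -/

/-- Two elements operator commute if the Jordan multiplications by them commute on `C₆`. -/
def OperatorCommute (A B : M3O) : Prop := ∀ X ∈ H3O, jord (jord X A) B = jord (jord X B) A

namespace OperatorCommute

variable {A B : M3O}

theorem map {T : M3O → M3O} (hT : IsJordanStarAut T) (hA : A ∈ H3O) (hB : B ∈ H3O)
    (h : OperatorCommute A B) : OperatorCommute (T A) (T B) := by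
  intro Y hY
  obtain ⟨X, hX, rfl⟩ := hT.1.surjOn hY
  rw [← hT.map_jord hX hA, ← hT.map_jord hX hB, ← hT.map_jord (jord_mem_H3O hX hA) hB,
    ← hT.map_jord (jord_mem_H3O hX hB) hA, h X hX]

theorem linearCombination (h : OperatorCommute A B) (a b c d : ℂ) :
    OperatorCommute (a • A + b • B) (c • A + d • B) := by
  intro X hX
  have hX' := h X hX
  simp only [← jordBilin_apply, map_add, map_smul, LinearMap.add_apply, LinearMap.smul_apply]
    at hX' ⊢
  rw [hX']
  module

-- In an associative algebra `[L_A, L_B] X = ¼ [[A, B], X]`.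
theorem commute_of_emb {C D : Matrix (Fin 3) (Fin 3) ℂ}
    (h : OperatorCommute (emb C) (emb D)) : Commute C D := by
  refine commute_of_forall_commute_commutator fun X hX => sub_eq_zero.1 ?_
  have hX' := h (emb X) (emb_mem_H3O_iff.2 hX)
  simp only [jord_emb] at hX'
  have hquarter := sub_eq_zero.2 (emb_injective hX')
  simp only [Matrix.smul_mul, Matrix.mul_smul, ← smul_add, ← smul_sub] at hquarter
  rw [smul_eq_zero_iff_right (by norm_num), smul_eq_zero_iff_right (by norm_num)] at hquarter
  rw [← hquarter]
  noncomm_ring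

end OperatorCommute

/-- A normal element of `C₆`: one that operator commutes with its adjoint. -/
def IsNormalO (X : M3O) : Prop := X ∈ H3O ∧ OperatorCommute X (mstar X)

theorem IsUnitaryO.isNormalO {U : M3O} (hU : IsUnitaryO U) : IsNormalO U := by
  refine ⟨hU.1, fun X hX => ?_⟩
  have hone : jord U (mstar U) = oneM := by
    simpa [trip, oneM_jord, jord_comm _ oneM, jord_comm (mstar U)] using hU.2 oneM oneM_mem_H3O
  have htrip := hU.2 X hX
  rw [trip, hone, oneM_jord, jord_comm U X, add_sub_assoc, add_eq_left, sub_eq_zero] at htrip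
  exact htrip.symm

theorem IsNormalO.exists_selfAdjoint_add_smul {X : M3O} (hX : IsNormalO X) :
    ∃ A ∈ H3O, ∃ B ∈ H3O, mstar A = A ∧ mstar B = B ∧ OperatorCommute A B ∧
      X = A + Complex.I • B := by
  have hstar := mstar_mem_H3O hX.1
  have mem (a b : ℂ) : a • X + b • mstar X ∈ H3O :=
    H3OSubmodule.add_mem (H3OSubmodule.smul_mem a hX.1) (H3OSubmodule.smul_mem b hstar)
  have mstar_eq (a b : ℂ) : mstar (a • X + b • mstar X) = conj b • X + conj a • mstar X := by
    simp only [← mstarLinear_apply, map_add, map_smulₛₗ]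
    rw [mstarLinear_apply (mstarLinear X), mstarLinear_apply, mstar_mstar, add_comm]
  refine ⟨_, mem 2⁻¹ 2⁻¹, _, mem (-(Complex.I / 2)) (Complex.I / 2), ?_, ?_,
    hX.2.linearCombination _ _ _ _, ?_⟩
  · rw [mstar_eq, map_inv₀, map_ofNat]
  · rw [mstar_eq, map_neg, map_div₀, map_ofNat, Complex.conj_I, neg_div, neg_neg]
  · rw [smul_add, smul_smul, smul_smul, mul_neg, ← mul_div_assoc, Complex.I_mul_I]
    module

theorem exists_isJordanStarAut_emb_eq_scalarDiag {C D : Matrix (Fin 3) (Fin 3) ℂ}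
    (hC : C.IsHermitian) (hD : D.IsHermitian) (hCD : Commute C D) :
    ∃ T, IsJordanStarAut T ∧
      ∃ c d : Fin 3 → ℝ, T (emb C) = scalarDiag (fun i => c i) ∧
        T (emb D) = scalarDiag fun i => d i := by
  obtain ⟨V, hV, c, d, hc, hd⟩ := exists_mem_unitary_conj_eq_diagonal_of_commute hC hD hCD
  refine ⟨_, (isQuatUnitary_map hV).isJordanStarAut, c, d, ?_, ?_⟩
  · rw [conjAct_emb, hc, ← emb_diagonal_ofReal]
    rfl
  · rw [conjAct_emb, hd, ← emb_diagonal_ofReal]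
    rfl

theorem exists_isJordanStarAut_eq_emb_of_operatorCommute {A B : M3O} (hA : A ∈ H3O)
    (hB : B ∈ H3O) (hAstar : mstar A = A) (hBstar : mstar B = B) (h : OperatorCommute A B) :
    ∃ T, IsJordanStarAut T ∧ ∃ C D, C.IsHermitian ∧ D.IsHermitian ∧ Commute C D ∧
      T A = emb C ∧ T B = emb D := by
  obtain ⟨S₁, hS₁, C, hC, hSA⟩ := exists_isDiagFixingAut_eq_emb hA hAstar
  obtain ⟨R, hR, c, -, hc, -⟩ := exists_isJordanStarAut_emb_eq_scalarDiag hC hC (.refl C)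
  have hRS := hR.comp hS₁.aut
  have hRA : R (S₁ A) = scalarDiag fun i => c i := by rw [hSA, hc]
  have hRBstar : mstar (R (S₁ B)) = R (S₁ B) := by
    simpa only [hBstar, Function.comp_apply] using (hRS.map_mstar hB).symm
  obtain ⟨S₂, hS₂, D, hD, hSB⟩ := exists_isDiagFixingAut_eq_emb (hRS.mem hB) hRBstar
  have hT := hS₂.aut.comp hRS
  have hTA : S₂ (R (S₁ A)) = emb (diagonal fun i => (c i : ℂ)) := by
    rw [hRA, hS₂.map_scalarDiag, emb_diagonal_ofReal]
  have hTAB := h.map hT hA hB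
  simp only [Function.comp_apply] at hTAB hSB
  rw [hTA, hSB] at hTAB
  exact ⟨_, hT, _, D, isHermitian_diagonal_iff.2 fun i => Complex.conj_ofReal (c i), hD,
    hTAB.commute_of_emb, hTA, hSB⟩

theorem IsNormalO.exists_isJordanStarAut_eq_scalarDiag {X : M3O} (hX : IsNormalO X) :
    ∃ T, IsJordanStarAut T ∧ ∃ d, T X = scalarDiag d := by
  obtain ⟨A, hA, B, hB, hAstar, hBstar, hAB, rfl⟩ := hX.exists_selfAdjoint_add_smul
  obtain ⟨S, hS, C, D, hC, hD, hCD, hSA, hSB⟩ :=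
    exists_isJordanStarAut_eq_emb_of_operatorCommute hA hB hAstar hBstar hAB
  obtain ⟨R, hR, c, d, hc, hd⟩ := exists_isJordanStarAut_emb_eq_scalarDiag hC hD hCD
  have hT := hR.comp hS
  refine ⟨_, hT, (fun i => (c i : ℂ)) + Complex.I • fun i => (d i : ℂ), ?_⟩
  rw [hT.map_add hA (H3OSubmodule.smul_mem _ hB), hT.map_smul _ hB, Function.comp_apply,
    Function.comp_apply, hSA, hSB, hc, hd, map_add, map_smul]

/-! ### Minimal projections -/

theorem isMinProjO_scalarDiag_single (k : Fin 3) : IsMinProjO (scalarDiag (Pi.single k 1)) := by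
  set e : Fin 3 → ℂ := Pi.single k 1
  have hstar : star e = e := by simp [e]
  have hidem : e * e = e := by simp [e, ← Pi.single_mul]
  refine ⟨⟨scalarDiag_mem_H3O e, by rw [mstar_scalarDiag, hstar],
    by rw [jord_scalarDiag_scalarDiag, hidem]⟩, fun h => ?_, fun X hX => ?_⟩
  · have := congr(($h k k).1.re)
    simp [e, scalarDiag_apply, oone] at this
  · refine ⟨(mstar X k k).1.re, ?_⟩
    have hkk := apply_self_eq_re_smul_oone (mstar_mem_H3O hX) k
    rw [trip, jord_comm _ (mstar X), jord_comm (mstar X), jord_comm _ (scalarDiag e),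
      jord_scalarDiag_scalarDiag, hidem]
    ext1 i j
    simp only [Matrix.sub_apply, Matrix.add_apply, Matrix.smul_apply, jord_scalarDiag_apply,
      smul_smul, ← add_smul, ← sub_smul]
    by_cases hij : i = k ∧ j = k
    · obtain ⟨rfl, rfl⟩ := hij
      rw [scalarDiag_apply, diagonal_apply_eq, hkk]
      simp [e, oone]
    · have hcoef : (e i + e j) / 2 * ((e i + e j) / 2) + (e i + e j) / 2 * ((e i + e j) / 2) -
          (e i + e j) / 2 = 0 := by
        simp only [e, Pi.single_apply]
        split_ifs <;> first | tauto | norm_num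
      have hzero : scalarDiag e i j = 0 := by
        simp only [scalarDiag_apply, diagonal_apply, e, Pi.single_apply]
        split_ifs <;> first | (exfalso; grind) | simp
      rw [hcoef, hzero, zero_smul, smul_zero]

theorem IsMinProjO.isIdempotentElem_of_emb {C : Matrix (Fin 3) (Fin 3) ℂ}
    (h : IsMinProjO (emb C)) : IsIdempotentElem C := by
  have := emb_injective ((jord_emb C C).symm.trans h.1.2.2)
  rwa [← two_smul ℂ, inv_smul_smul₀ two_ne_zero] at this

theorem IsMinProjO.ne_zero_of_emb {C : Matrix (Fin 3) (Fin 3) ℂ} (h : IsMinProjO (emb C)) :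
    C ≠ 0 := fun h0 => h.2.1 (h0 ▸ map_zero emb)

theorem IsMinProjO.mul_apply_of_emb {C : Matrix (Fin 3) (Fin 3) ℂ} (h : IsMinProjO (emb C))
    {k : Fin 3} (hk : C k k ≠ 0) (i j : Fin 3) : C i k * C k j = C k k * C i j := by
  have hC := emb_mem_H3O_iff.1 h.1.1
  obtain ⟨c, hc⟩ := h.2.2 (emb (single k k 1)) (emb_mem_H3O_iff.2 (by simp [IsHermitian]))
  rw [trip_emb] at hc
  have hentry (i j : Fin 3) : complexToOct (C i k * C k j) = c • complexToOct (C i j) := by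
    have := congr($hc i j)
    rw [emb_apply, Matrix.smul_apply, emb_apply] at this
    rw [← this]
    simp [mul_apply, single_apply, ite_and]
  have hreal := Complex.conj_eq_iff_re.1 (hC.apply k k)
  obtain rfl : C k k = c := by
    have hkk := hentry k k
    rw [← hreal, ← Complex.ofReal_mul, complexToOct_ofReal, complexToOct_ofReal, smul_smul,
      Complex.ofReal_mul, hreal] at hkk
    exact mul_right_cancel₀ hk (by simpa [oone] using congr(($hkk).1.re))
  apply complexToOct_injective
  rw [hentry, ← hreal, smul_complexToOct]

section ComplexOrder

open ComplexOrder

theorem exists_eq_vecMulVec_star_of_posSemidef {n 𝕜 : Type*} [RCLike 𝕜]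
    {C : Matrix n n 𝕜} (hC : C.PosSemidef) {k : n} (hk : C k k ≠ 0)
    (h : ∀ i j, C i k * C k j = C k k * C i j) : ∃ v, C = vecMulVec v (star v) := by
  obtain ⟨r, hr, hrk⟩ := RCLike.nonneg_iff_exists_ofReal.1 (hC.diag_nonneg (i := k))
  have hsqrt : ((√r : ℝ) : 𝕜) * (√r : ℝ) = C k k := by
    rw [← RCLike.ofReal_mul, Real.mul_self_sqrt hr, hrk]
  refine ⟨fun i => C i k / (√r : ℝ), ?_⟩
  ext i j
  have hstar : star (C j k / ((√r : ℝ) : 𝕜)) = C k j / (√r : ℝ) := by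
    rw [star_div₀, hC.isHermitian.apply, RCLike.star_def, RCLike.conj_ofReal]
  rw [vecMulVec_apply, Pi.star_apply, hstar, div_mul_div_comm, hsqrt, h, mul_div_cancel_left₀ _ hk]

theorem IsMinProjO.exists_eq_vecMulVec_of_emb {C : Matrix (Fin 3) (Fin 3) ℂ}
    (h : IsMinProjO (emb C)) : ∃ v, star v ⬝ᵥ v = 1 ∧ C = vecMulVec v (star v) := by
  have hidem := h.isIdempotentElem_of_emb
  have hsq : Cᴴ * C = C := by rw [(emb_mem_H3O_iff.1 h.1.1).eq, hidem.eq]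
  have hpos : C.PosSemidef := hsq ▸ posSemidef_conjTranspose_mul_self C
  obtain ⟨k, hk⟩ : ∃ k, C k k ≠ 0 := by
    by_contra! hdiag
    exact h.ne_zero_of_emb (hpos.trace_eq_zero_iff.1 (Finset.sum_eq_zero fun k _ => hdiag k))
  obtain ⟨v, rfl⟩ := exists_eq_vecMulVec_star_of_posSemidef hpos hk (h.mul_apply_of_emb hk)
  refine ⟨v, ?_, rfl⟩
  have hsmul : (star v ⬝ᵥ v) • vecMulVec v (star v) = (1 : ℂ) • vecMulVec v (star v) := by
    rw [one_smul, ← vecMulVec_smul, ← vecMulVec_mul_vecMulVec, hidem.eq]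
  exact smul_left_injective ℂ h.ne_zero_of_emb hsmul

end ComplexOrder

/-! ### Simultaneous reduction -/

theorem IsMinProjO.exists_isDiagFixingAut_eq_emb_vecMulVec {P : M3O} (hP : IsMinProjO P) :
    ∃ T, IsDiagFixingAut T ∧ ∃ w : Fin 3 → ℝ, w ⬝ᵥ w = 1 ∧
      T P = emb ((vecMulVec w w).map Complex.ofReal) := by
  obtain ⟨T, hT, C, -, hTP⟩ := exists_isDiagFixingAut_eq_emb hP.1.1 hP.1.2.1
  obtain ⟨v, hv, rfl⟩ := (hTP ▸ hT.aut.isMinProjO hP).exists_eq_vecMulVec_of_emb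
  choose p hp hpv using fun i => Complex.exists_norm_eq_mul_self (v i)
  refine ⟨_, (isDiagFixingAut_diagonal hp).comp hT, fun i => ‖v i‖, ?_, ?_⟩
  · simp only [dotProduct, Pi.star_apply, RCLike.star_def, Complex.conj_mul'] at hv ⊢
    simp only [← sq]
    exact_mod_cast hv
  · rw [Function.comp_apply, hTP, conjAct_emb, diagonal_conjTranspose]
    congr 1
    ext i j
    have hconj : (‖v j‖ : ℂ) = conj (p j) * conj (v j) := by
      rw [← map_mul, ← hpv, Complex.conj_ofReal]
    rw [mul_diagonal, diagonal_mul, map_apply, vecMulVec_apply, vecMulVec_apply,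
      Complex.ofReal_mul, hconj, hpv]
    simp only [Pi.star_apply, RCLike.star_def]
    ring

theorem mulVec_skewVec_eq_self {M : Matrix (Fin 3) (Fin 3) HC} (hM : M.IsHermitian)
    (htr : reTrace M = 1) {Q : M3O} (hQ : Q ∈ H3O) (h : jord (ofParts M 0) Q = 0) :
    M *ᵥ skewVec Q = skewVec Q := by
  obtain ⟨N, b, hN, rfl⟩ := exists_eq_ofParts hQ
  rw [jord_ofParts hM hN, smul_eq_zero_iff_right (by norm_num)] at h
  have := congrArg skewVec h
  rw [skewVec_ofParts, htr, one_smul, smul_zero, mulVec_zero, sub_zero, add_zero] at this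
  rw [skewVec_ofParts]
  exact (sub_eq_zero.1 this).symm

/-- The `3 × 3` matrices with entries in `ℍ_ℂ × {0}`. -/
def biquatSubmodule : Submodule ℂ M3O where
  carrier := {X | ∀ i j, (X i j).2 = 0}
  zero_mem' _ _ := rfl
  add_mem' hX hY i j := by rw [Matrix.add_apply, Prod.snd_add, hX, hY, add_zero]
  smul_mem' c X hX i j := by rw [Matrix.smul_apply, Prod.smul_snd, hX, smul_zero]

theorem emb_mem_biquatSubmodule (C : Matrix (Fin 3) (Fin 3) ℂ) : emb C ∈ biquatSubmodule :=
  fun _ _ => rfl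

theorem scalarDiag_mem_biquatSubmodule (d : Fin 3 → ℂ) : scalarDiag d ∈ biquatSubmodule := by
  rw [scalarDiag_eq_ofParts]
  exact fun i j => congr($skewMatrix_zero i j)

theorem mem_biquatSubmodule_of_skewVec_eq_zero {X : M3O} (hX : X ∈ H3O) (h : skewVec X = 0) :
    X ∈ biquatSubmodule := by
  obtain ⟨M, a, -, rfl⟩ := exists_eq_ofParts hX
  rw [skewVec_ofParts] at h
  exact fun i j => by rw [ofParts_apply, h, skewMatrix_zero, Matrix.zero_apply]

theorem mem_biquatSubmodule_of_jord_eq_zero {w : Fin 3 → ℝ} (hw : w ⬝ᵥ w = 1) {Q : M3O}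
    (hQ : Q ∈ H3O) (h : jord (emb ((vecMulVec w w).map Complex.ofReal)) Q = 0) {k : Fin 3}
    (hk : w k ≠ 0) (hQk : skewVec Q k = 0) : Q ∈ biquatSubmodule := by
  refine mem_biquatSubmodule_of_skewVec_eq_zero hQ ?_
  set M := ((vecMulVec w w).map Complex.ofReal).map complexToHC
  have hM_apply (i j : Fin 3) : M i j = ((w i * w j : ℝ) : ℂ) • (1 : HC) := complexToHC_ofReal _
  have hM : M.IsHermitian := IsHermitian.ext fun i j => by
    rw [hM_apply, hM_apply, mul_comm, Quaternion.star_smul, star_one]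
  have htr : reTrace M = 1 := by
    simp only [reTrace, hM_apply, Quaternion.re_smul, Quaternion.re_one, smul_eq_mul, mul_one]
    exact_mod_cast hw
  rw [emb_eq_ofParts] at h
  have hrange := mulVec_skewVec_eq_self hM htr hQ h
  have hmul (i : Fin 3) : skewVec Q i = (w i : ℂ) • ∑ j, (w j : ℂ) • skewVec Q j := by
    rw [← congr($hrange i), mulVec, dotProduct, Finset.smul_sum]
    simp only [hM_apply, smul_mul_assoc, one_mul, smul_smul, Complex.ofReal_mul]
  have hsum : ∑ j, (w j : ℂ) • skewVec Q j = 0 := by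
    have := (hmul k).symm.trans hQk
    exact (smul_eq_zero_iff_right (Complex.ofReal_ne_zero.2 hk)).1 this
  exact funext fun i => by rw [hmul, hsum, smul_zero, Pi.zero_apply]

theorem IsMinProjO.exists_isDiagFixingAut_mem_biquatSubmodule {P Q : M3O} (hP : IsMinProjO P)
    (hQ : Q ∈ H3O) (hstar : mstar Q = Q) (h : jord P Q = 0) :
    ∃ T, IsDiagFixingAut T ∧ T P ∈ biquatSubmodule ∧ T Q ∈ biquatSubmodule := by
  obtain ⟨S, hS, w, hw, hSP⟩ := hP.exists_isDiagFixingAut_eq_emb_vecMulVec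
  obtain ⟨k, hk⟩ : ∃ k, w k ≠ 0 := by
    by_contra! hw0
    simp [funext hw0] at hw
  have hSQ : mstar (S Q) = S Q := by rw [← hS.aut.map_mstar hQ, hstar]
  obtain ⟨g, hg, z, hz⟩ := exists_isOctAut_eq_complex congr($hSQ (k + 1) (k + 2))
  have hT := hg.isDiagFixingAut.comp hS
  have hTP : (g.toLinearMap.mapMatrix ∘ S) P = emb ((vecMulVec w w).map Complex.ofReal) := by
    rw [Function.comp_apply, hSP]
    ext1 i j
    rw [LinearMap.mapMatrix_apply, map_apply, emb_apply, map_apply, complexToOct_ofReal]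
    exact hg.map_smul_oone _
  refine ⟨_, hT, hTP ▸ emb_mem_biquatSubmodule _,
    mem_biquatSubmodule_of_jord_eq_zero hw (hT.aut.mem hQ) ?_ hk congr(($hz).2)⟩
  rw [← hTP, ← hT.aut.map_jord hP.1.1 hQ, h, hT.aut.map_zero]

theorem IsJordanStarAut.isNormalO {T : M3O → M3O} (hT : IsJordanStarAut T) {X : M3O}
    (hX : IsNormalO X) : IsNormalO (T X) :=
  ⟨hT.mem hX.1, hT.map_mstar hX.1 ▸ hX.2.map hT hX.1 (mstar_mem_H3O hX.1)⟩

theorem IsNormalO.exists_eq_smul_oneM_add {X : M3O} (hX : IsNormalO X) :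
    ∃ P Q, IsMinProjO P ∧ IsMinProjO Q ∧ jord P Q = 0 ∧
      ∃ a b c : ℂ, X = a • oneM + b • P + c • Q := by
  obtain ⟨T, hT, d, hTX⟩ := hX.exists_isJordanStarAut_eq_scalarDiag
  obtain ⟨S, hS, hinv⟩ := hT.exists_inverse
  set e : Fin 3 → M3O := fun k => scalarDiag (Pi.single k 1)
  have he (k : Fin 3) : e k ∈ H3O := scalarDiag_mem_H3O _
  have hd : scalarDiag d = d 2 • oneM + (d 0 - d 2) • e 0 + (d 1 - d 2) • e 1 := by
    rw [← scalarDiag_one, ← map_smul, ← map_smul, ← map_smul, ← map_add, ← map_add]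
    congr 1
    ext k
    fin_cases k <;> simp
  have horth : jord (e 0) (e 1) = 0 := by
    rw [jord_scalarDiag_scalarDiag, ← map_zero scalarDiag]
    congr 1
    ext k
    fin_cases k <;> simp
  refine ⟨S (e 0), S (e 1), hS.isMinProjO (isMinProjO_scalarDiag_single 0),
    hS.isMinProjO (isMinProjO_scalarDiag_single 1), ?_, d 2, d 0 - d 2, d 1 - d 2, ?_⟩
  · rw [← hS.map_jord (he 0) (he 1), horth, hS.map_zero]
  · have smul_mem (c : ℂ) {Y : M3O} (hY : Y ∈ H3O) : c • Y ∈ H3O := H3OSubmodule.smul_mem c hY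
    rw [← hinv.1 hX.1, hTX, hd, hS.map_add
      (H3OSubmodule.add_mem (smul_mem _ oneM_mem_H3O) (smul_mem _ (he 0))) (smul_mem _ (he 1)),
      hS.map_add (smul_mem _ oneM_mem_H3O) (smul_mem _ (he 0)), hS.map_smul _ oneM_mem_H3O,
      hS.map_smul _ (he 0), hS.map_smul _ (he 1), hS.map_oneM]

theorem IsNormalO.exists_isDiagFixingAut_mem_biquatSubmodule {X : M3O} (hX : IsNormalO X) :
    ∃ T, IsDiagFixingAut T ∧ T X ∈ biquatSubmodule := by
  obtain ⟨P, Q, hP, hQ, hPQ, a, b, c, rfl⟩ := hX.exists_eq_smul_oneM_add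
  obtain ⟨T, hT, hTP, hTQ⟩ :=
    hP.exists_isDiagFixingAut_mem_biquatSubmodule hQ.1.1 hQ.1.2.1 hPQ
  have hone := H3OSubmodule.smul_mem a oneM_mem_H3O
  have hP' := H3OSubmodule.smul_mem b hP.1.1
  refine ⟨T, hT, ?_⟩
  rw [hT.aut.map_add (H3OSubmodule.add_mem hone hP') (H3OSubmodule.smul_mem c hQ.1.1),
    hT.aut.map_add hone hP', hT.aut.map_smul a oneM_mem_H3O, hT.aut.map_smul b hP.1.1,
    hT.aut.map_smul c hQ.1.1, hT.aut.map_oneM, ← scalarDiag_one]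
  exact add_mem (add_mem (Submodule.smul_mem _ a (scalarDiag_mem_biquatSubmodule 1))
    (Submodule.smul_mem _ b hTP)) (Submodule.smul_mem _ c hTQ)

end

theorem statement18_general (U E : M3O) (hU : IsNormalO U) (hE : IsNormalO E) :
    ∃ T : M3O → M3O, IsJordanStarAut T ∧
      (∀ i j, i ≠ j → T E i j = 0) ∧
      (∀ i j, (T U i j).2 = 0) := by
  obtain ⟨S, hS, d, hSE⟩ := hE.exists_isJordanStarAut_eq_scalarDiag
  obtain ⟨F, hF, hFSU⟩ := (hS.isNormalO hU).exists_isDiagFixingAut_mem_biquatSubmodule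
  refine ⟨F ∘ S, hF.aut.comp hS, fun i j hij => ?_, hFSU⟩
  rw [Function.comp_apply, hSE, hF.map_scalarDiag, scalarDiag_apply, diagonal_apply_ne _ hij]

/-- Let `U, E ∈ C₆` be unitary elements. Then there is a Jordan
`*`-automorphism `T` of `C₆` such that `T(E)` is a diagonal matrix and every entry of
`T(U)` lies in `ℍ_ℂ × {0} ⊆ 𝕆` (i.e. the entries of `T(U)` are biquaternions). -/
theorem statement18 (U E : M3O) (hU : IsUnitaryO U) (hE : IsUnitaryO E) :
    ∃ T : M3O → M3O, IsJordanStarAut T ∧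
      (∀ i j, i ≠ j → T E i j = 0) ∧
      (∀ i j, (T U i j).2 = 0) :=
  statement18_general U E hU.isNormalO hE.isNormalO
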